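/- Let σ > 0 and N ≥ 1 an integer. Then there exists a nondecreasing, Lipschitz-continuous function F : ℝ → ℝ with m < F(x) < M for all x ∈ ℝ which solves equation (E). -/

import Mathlib

open MeasureTheory Filter Set

/-- Centered Gaussian density with variance `σ²`. -/
noncomputable def gq (σ z : ℝ) : ℝ :=
  Real.exp (-(z ^ 2) / (2 * σ ^ 2)) / (σ * Real.sqrt (2 * Real.pi))

/-- The averaged kernel `q̄(σ,x,z)`. -/
noncomputable def gqbar (σ x z : ℝ) : ℝ :=
  if x = 0 then gq σ z else (1 / x) * ∫ y in (0:ℝ)..x, gq σ (y - z)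

/-- `Φ⁺(y) = E[V·1_{V>y}]`. -/
noncomputable def Phip {Ω : Type*} [MeasurableSpace Ω] (P : Measure Ω) (V : Ω → ℝ) (y : ℝ) : ℝ :=
  ∫ ω in {ω | V ω > y}, V ω ∂P

/-- `Π⁺(y) = P(V > y)`. -/
noncomputable def Pip {Ω : Type*} [MeasurableSpace Ω] (P : Measure Ω) (V : Ω → ℝ) (y : ℝ) : ℝ :=
  (P {ω | V ω > y}).toReal

/-- `Φ⁻(y) = E[V·1_{V≤y}]`. -/
noncomputable def Phim {Ω : Type*} [MeasurableSpace Ω] (P : Measure Ω) (V : Ω → ℝ) (y : ℝ) : ℝ :=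
  ∫ ω in {ω | V ω ≤ y}, V ω ∂P

/-- `Π⁻(y) = P(V ≤ y)`. -/
noncomputable def Pim {Ω : Type*} [MeasurableSpace Ω] (P : Measure Ω) (V : Ω → ℝ) (y : ℝ) : ℝ :=
  (P {ω | V ω ≤ y}).toReal

/-- `Ψ⁺ = Φ⁺/Π⁺`. -/
noncomputable def Psip {Ω : Type*} [MeasurableSpace Ω] (P : Measure Ω) (V : Ω → ℝ) (y : ℝ) : ℝ :=
  Phip P V y / Pip P V y

/-- `Ψ⁻ = Φ⁻/Π⁻`. -/
noncomputable def Psim {Ω : Type*} [MeasurableSpace Ω] (P : Measure Ω) (V : Ω → ℝ) (y : ℝ) : ℝ :=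
  Phim P V y / Pim P V y

/-- `φ⁺_g`. -/
noncomputable def phip {Ω : Type*} [MeasurableSpace Ω] (P : Measure Ω) (V : Ω → ℝ)
    (σ : ℝ) (g : ℝ → ℝ) (x : ℝ) : ℝ :=
  (∫ z, Phip P V (g z) * gq σ (x - z)) / (∫ z, Pip P V (g z) * gq σ (x - z))

/-- `φ⁻_g`. -/
noncomputable def phim {Ω : Type*} [MeasurableSpace Ω] (P : Measure Ω) (V : Ω → ℝ)
    (σ : ℝ) (g : ℝ → ℝ) (x : ℝ) : ℝ :=
  (∫ z, Phim P V (g z) * gq σ (x - z)) / (∫ z, Pim P V (g z) * gq σ (x - z))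

/-- `φ_g`, equal to `φ⁺_g` on `[0,∞)` and `φ⁻_g` on `(−∞,0)`. -/
noncomputable def phig {Ω : Type*} [MeasurableSpace Ω] (P : Measure Ω) (V : Ω → ℝ)
    (σ : ℝ) (g : ℝ → ℝ) (x : ℝ) : ℝ :=
  if 0 ≤ x then phip P V σ g x else phim P V σ g x

/-- The interior of the support of the law of `V` is `(m, M)` (with `V` bounded). -/
def SuppIoo {Ω : Type*} [MeasurableSpace Ω] (P : Measure Ω) (V : Ω → ℝ) (m M : ℝ) : Prop :=
  m < M ∧ (∀ᵐ ω ∂P, V ω ∈ Set.Icc m M) ∧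
    (∀ y < M, 0 < P {ω | V ω > y}) ∧ (∀ y, m < y → 0 < P {ω | V ω ≤ y})

/-- Equation (E). -/
def SolvesE {Ω : Type*} [MeasurableSpace Ω] (P : Measure Ω) (V : Ω → ℝ)
    (σ : ℝ) (N : ℕ) (F : ℝ → ℝ) : Prop :=
  ∀ x : ℝ, F x =
    ∫ z, ((1 / (N:ℝ)) * gq σ (x - z) + (((N:ℝ) - 1) / (N:ℝ)) * gqbar σ x z) * phig P V σ F z


open MeasureTheory Filter Set

section Scarf

set_option linter.unusedSectionVars false

variable {X I L : Type*} [DecidableEq X] [DecidableEq I] [LinearOrder L]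

lemma pair_lemma {A B : Type*} [DecidableEq A] [DecidableEq B] (f : A → B) (s : Finset A)
    (t : Finset B) (hf : s.image f = t) (hc : s.card = t.card + 1) :
    ∃ a ∈ s, ∃ b ∈ s, a ≠ b ∧ f a = f b ∧
      ∀ k ∈ s, (s.erase k).image f = t ↔ (k = a ∨ k = b) := by
  have hmaps : ∀ a ∈ s, f a ∈ t := fun a ha => hf ▸ Finset.mem_image_of_mem f ha
  obtain ⟨a, ha, b, hb, hab, hfab⟩ :=
    Finset.exists_ne_map_eq_of_card_lt_of_maps_to (by omega : t.card < s.card) hmaps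
  have key : ∀ k ∈ s, (s.erase k).image f = t → Set.InjOn f (s.erase k) := by
    intro k hk h
    apply Finset.injOn_of_card_image_eq
    rw [h, Finset.card_erase_of_mem hk, hc]; rfl
  refine ⟨a, ha, b, hb, hab, hfab, ?_⟩
  intro k hk
  constructor
  · intro h
    by_contra hne
    push Not at hne
    exact hab (key k hk h (by simp [ha, hne.1.symm]) (by simp [hb, hne.2.symm]) hfab)
  · have gen : ∀ a ∈ s, ∀ b ∈ s, a ≠ b → f a = f b → (s.erase a).image f = t := by
      intro a ha b hb hab hfab
      apply Finset.Subset.antisymm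
      · rw [← hf]; exact Finset.image_subset_image (Finset.erase_subset _ _)
      · intro y hy
        rw [← hf] at hy
        obtain ⟨x, hx, rfl⟩ := Finset.mem_image.1 hy
        by_cases hxa : x = a
        · subst hxa
          exact Finset.mem_image.2 ⟨b, by simp [hb, hab.symm], hfab.symm⟩
        · exact Finset.mem_image.2 ⟨x, by simp [hx, hxa], rfl⟩
    rintro (rfl | rfl)
    · exact gen k ha b hb hab hfab
    · exact gen k hb a ha hab.symm hfab.symm

def Dom (r : I → X → L) (S : Finset X) (C : Finset I) : Prop :=
  ∀ x, ∃ i ∈ C, ∀ s ∈ S, r i x ≤ r i s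

/-- incidence of room `(S,C)` and door `(T,D)` -/
def Inc (p q : Finset X × Finset I) : Prop :=
  (∃ x ∉ q.1, p = (insert x q.1, q.2)) ∨ (∃ j ∈ q.2, p = (q.1, q.2.erase j))

lemma Dom.mono {r : I → X → L} {S T : Finset X} {C D : Finset I} (h : Dom r S C) (hT : T ⊆ S)
    (hD : C ⊆ D) : Dom r T D := by
  intro x
  obtain ⟨i, hi, h⟩ := h x
  exact ⟨i, hD hi, fun s hs => h s (hT hs)⟩

lemma exists_argmin (r : I → X → L) (T : Finset X) (hT : T.Nonempty) :
    ∃ μ : I → X, ∀ i, μ i ∈ T ∧ ∀ t ∈ T, r i (μ i) ≤ r i t := by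
  have : ∀ i, ∃ x ∈ T, ∀ t ∈ T, r i x ≤ r i t := fun i => Finset.exists_min_image T (r i) hT
  choose μ h1 h2 using this
  exact ⟨μ, fun i => ⟨h1 i, h2 i⟩⟩

lemma image_argmin {r : I → X → L} (hr : ∀ i, Function.Injective (r i)) {T : Finset X}
    {D : Finset I} {μ : I → X} (hμ : ∀ i, μ i ∈ T ∧ ∀ t ∈ T, r i (μ i) ≤ r i t)
    (h : Dom r T D) : D.image μ = T := by
  apply Finset.Subset.antisymm
  · intro x hx
    obtain ⟨i, _, rfl⟩ := Finset.mem_image.1 hx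
    exact (hμ i).1
  · intro x hx
    obtain ⟨i, hi, h⟩ := h x
    refine Finset.mem_image.2 ⟨i, hi, hr i (le_antisymm ((hμ i).2 x hx) (h _ (hμ i).1))⟩

open Classical in
lemma door_lemma [Fintype X] [Fintype I] {r : I → X → L} (hr : ∀ i, Function.Injective (r i))
    {T : Finset X} {D : Finset I} (hT : T.Nonempty) (h : Dom r T D) (hc : D.card = T.card + 1) :
    ∃ p q : Finset X × Finset I, p ≠ q ∧
      ∀ ρ : Finset X × Finset I, (Dom r ρ.1 ρ.2 ∧ Inc ρ (T, D)) ↔ (ρ = p ∨ ρ = q) := by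
  obtain ⟨μ, hμ⟩ := exists_argmin r T hT
  have him := image_argmin hr hμ h
  obtain ⟨i, hi, j, hj, hij, hμij, hpair⟩ := pair_lemma μ D T him hc
  -- W
  let W : I → X → Prop := fun e x => ∀ k ∈ D.erase e, r k (μ k) < r k x
  have hWD : ∀ e, (∃ x, W e x) ↔ ¬ Dom r T (D.erase e) := by
    intro e
    constructor
    · rintro ⟨x, hx⟩ hd
      obtain ⟨k, hk, hk'⟩ := hd x
      exact absurd (hx k hk) (not_lt.2 (hk' _ (hμ k).1))
    · intro hd
      unfold Dom at hd
      push Not at hd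
      obtain ⟨x, hx⟩ := hd
      refine ⟨x, fun k hk => ?_⟩
      obtain ⟨s, hs, hlt⟩ := hx k hk
      exact ((hμ k).2 s hs).trans_lt hlt
  -- existence of room with tag e
  have hWnot : ∀ e, (e = i ∨ e = j) → e ∈ D → ∀ x, W e x → x ∉ T := by
    intro e he heD x hx hxT
    have := (hpair e heD).2 he
    rw [← this] at hxT
    obtain ⟨k, hk, rfl⟩ := Finset.mem_image.1 hxT
    exact lt_irrefl _ (hx k hk)
  have hWe : ∀ e x, W e x → ∀ t ∈ T, r e x ≤ r e t := by
    intro e x hx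
    obtain ⟨k, hk, hk'⟩ := h x
    by_cases hke : k = e
    · subst hke; exact hk'
    · exact absurd (hx k (by simp [hk, hke])) (not_lt.2 (hk' _ (hμ k).1))
  have hex : ∀ e, (e = i ∨ e = j) → e ∈ D → ∃ ρ : Finset X × Finset I,
      (Dom r ρ.1 ρ.2) ∧ ((∃ x, W e x ∧ (∀ y, W e y → r e y ≤ r e x) ∧ ρ = (insert x T, D)) ∨
        ((¬ ∃ x, W e x) ∧ ρ = (T, D.erase e))) := by
    intro e he heD
    by_cases hw : ∃ x, W e x
    · obtain ⟨x, hx, hxm⟩ := Finset.exists_max_image (Finset.univ.filter (W e)) (r e)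
        (by obtain ⟨x, hx⟩ := hw; exact ⟨x, by simp [hx]⟩)
      simp only [Finset.mem_filter, Finset.mem_univ, true_and] at hx hxm
      refine ⟨(insert x T, D), ?_, Or.inl ⟨x, hx, hxm, rfl⟩⟩
      intro y
      by_cases hy : W e y
      · refine ⟨e, heD, ?_⟩
        intro s hs
        rcases Finset.mem_insert.1 hs with rfl | hs
        · exact hxm y hy
        · exact hWe e y hy s hs
      · simp only [W] at hy
        push Not at hy
        obtain ⟨k, hk, hle⟩ := hy
        refine ⟨k, Finset.mem_of_mem_erase hk, ?_⟩
        intro s hs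
        rcases Finset.mem_insert.1 hs with rfl | hs
        · exact hle.trans (hx k hk).le
        · exact hle.trans ((hμ k).2 s hs)
    · refine ⟨(T, D.erase e), ?_, Or.inr ⟨hw, rfl⟩⟩
      by_contra hd
      exact hw ((hWD e).2 hd)
  obtain ⟨p, hpD, hp⟩ := hex i (Or.inl rfl) hi
  obtain ⟨q, hqD, hq⟩ := hex j (Or.inr rfl) hj
  have hins : ∀ x y : X, x ∉ T → insert x T = insert y T → x = y := by
    intro x y hx hxy
    have : x ∈ insert y T := hxy ▸ Finset.mem_insert_self x T
    rcases Finset.mem_insert.1 this with h | h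
    · exact h
    · exact absurd h hx
  have huniq : ∀ e, (e = i ∨ e = j) → e ∈ D → ∀ ρ ρ' : Finset X × Finset I,
     ((∃ x, W e x ∧ (∀ y, W e y → r e y ≤ r e x) ∧ ρ = (insert x T, D)) ∨
        ((¬ ∃ x, W e x) ∧ ρ = (T, D.erase e))) → 
     ((∃ x, W e x ∧ (∀ y, W e y → r e y ≤ r e x) ∧ ρ' = (insert x T, D)) ∨
        ((¬ ∃ x, W e x) ∧ ρ' = (T, D.erase e))) → ρ = ρ' := by
    rintro e he heD ρ ρ' (⟨x, hx, hxm, rfl⟩ | ⟨hn, rfl⟩) (⟨y, hy, hym, rfl⟩ | ⟨hn', rfl⟩)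
    · have : x = y := hr e (le_antisymm (hym x hx) (hxm y hy))
      rw [this]
    · exact absurd ⟨x, hx⟩ hn'
    · exact absurd ⟨y, hy⟩ hn
    · rfl
  have hinc : ∀ e, (e = i ∨ e = j) → e ∈ D → ∀ ρ : Finset X × Finset I,
      ((∃ x, W e x ∧ (∀ y, W e y → r e y ≤ r e x) ∧ ρ = (insert x T, D)) ∨
        ((¬ ∃ x, W e x) ∧ ρ = (T, D.erase e))) → Inc ρ (T, D) := by
    rintro e he heD ρ (⟨x, hx, hxm, rfl⟩ | ⟨hn, rfl⟩)
    · exact Or.inl ⟨x, hWnot e he heD x hx, rfl⟩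
    · exact Or.inr ⟨e, heD, rfl⟩
  refine ⟨p, q, ?_, ?_⟩
  · intro hpq
    rcases hp with ⟨x, hx, hxm, rfl⟩ | ⟨hn, rfl⟩ <;> rcases hq with ⟨y, hy, hym, hq⟩ | ⟨hn', hq⟩
    · rw [hq] at hpq
      have hxy : x = y := hins x y (hWnot i (Or.inl rfl) hi x hx) (Prod.ext_iff.1 hpq).1
      subst hxy
      obtain ⟨k, hk, hk'⟩ := h x
      by_cases hki : k = i
      · exact absurd (hy k (by rw [hki]; simp [hi, hij])) (not_lt.2 (hk' _ (hμ k).1))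
      · exact absurd (hx k (by simp [hk, hki])) (not_lt.2 (hk' _ (hμ k).1))
    · rw [hq] at hpq
      have h2 := (Prod.ext_iff.1 hpq).2
      simp only at h2
      exact absurd h2.symm (by simpa using hj)
    · rw [hq] at hpq
      have h2 := (Prod.ext_iff.1 hpq).2
      simp only at h2
      exact absurd h2 (by simpa using hi)
    · rw [hq] at hpq
      have h2 := (Prod.ext_iff.1 hpq).2
      simp only at h2
      have : j ∈ D.erase i := by simp [hj, hij.symm]
      rw [h2] at this
      simp at this
  · intro ρ
    constructor
    · rintro ⟨hd, hI⟩
      suffices ∃ e, (e = i ∨ e = j) ∧ ((∃ x, W e x ∧ (∀ y, W e y → r e y ≤ r e x) ∧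
          ρ = (insert x T, D)) ∨ ((¬ ∃ x, W e x) ∧ ρ = (T, D.erase e))) by
        obtain ⟨e, he, h'⟩ := this
        rcases he with rfl | rfl
        · exact Or.inl (huniq e (Or.inl rfl) hi _ _ h' hp)
        · exact Or.inr (huniq e (Or.inr rfl) hj _ _ h' hq)
      rcases hI with ⟨x, hx, rfl⟩ | ⟨k, hk, rfl⟩
      · simp only at hd hx
        obtain ⟨ν, hν⟩ := exists_argmin r (insert x T) (Finset.insert_nonempty _ _)
        have himν := image_argmin hr hν hd
        have hinj : Set.InjOn ν D := by
          apply Finset.injOn_of_card_image_eq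
          rw [himν, Finset.card_insert_of_notMem hx, hc]
        have hxm : x ∈ D.image ν := by rw [himν]; exact Finset.mem_insert_self _ _
        obtain ⟨e, heD, hex'⟩ := Finset.mem_image.1 hxm
        have hk : ∀ k ∈ D, k ≠ e → ν k = μ k ∧ r k (μ k) < r k x := by
          intro k hk hke
          have hne : ν k ≠ x := by
            intro hh
            exact hke (hinj hk heD (hh.trans hex'.symm))
          have hνT : ν k ∈ T := by
            rcases Finset.mem_insert.1 (hν k).1 with h | h
            · exact absurd h hne
            · exact h
          have heq : ν k = μ k := by
            apply hr k
            exact le_antisymm ((hν k).2 _ (Finset.mem_insert_of_mem (hμ k).1)) ((hμ k).2 _ hνT)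
          refine ⟨heq, ?_⟩
          rw [← heq]
          exact lt_of_le_of_ne ((hν k).2 x (Finset.mem_insert_self _ _)) (fun hh => hne (hr k hh))
        refine ⟨e, ?_, Or.inl ⟨x, ?_, ?_, rfl⟩⟩
        · by_contra hne
          push Not at hne
          apply hij
          apply hinj hi hj
          rw [(hk i hi hne.1.symm).1, (hk j hj hne.2.symm).1, hμij]
        · intro k hk'
          exact (hk k (Finset.mem_of_mem_erase hk') (Finset.ne_of_mem_erase hk')).2
        · intro y hy
          obtain ⟨k, hkD, hky⟩ := hd y
          by_cases hke : k = e
          · subst hke; exact hky x (Finset.mem_insert_self _ _)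
          · exact absurd (hy k (by simp [hkD, hke]))
              (not_lt.2 (hky _ (Finset.mem_insert_of_mem (hμ k).1)))
      · simp only at hd hk
        refine ⟨k, ?_, Or.inr ⟨?_, rfl⟩⟩
        · exact (hpair k hk).1 (image_argmin hr hμ hd)
        · intro hw
          exact (hWD k).1 hw hd
    · rintro (rfl | rfl)
      · exact ⟨hpD, hinc i (Or.inl rfl) hi _ hp⟩
      · exact ⟨hqD, hinc j (Or.inr rfl) hj _ hq⟩

/-- special doors -/
def Special (c : X → I) (i0 : I) (q : Finset X × Finset I) : Prop :=
  q.2.card = q.1.card + 1 ∧ i0 ∈ q.2 ∧ q.1.image c = q.2.erase i0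

lemma room_lemma (c : X → I) (i0 : I)
    {S : Finset X} {C : Finset I} (hc : S.card = C.card) (hfull : S.image c ≠ C) :
    (∀ q, ¬ (Special c i0 q ∧ Inc (S, C) q)) ∨ ∃ p q : Finset X × Finset I, p ≠ q ∧
      ∀ ρ, (Special c i0 ρ ∧ Inc (S, C) ρ) ↔ (ρ = p ∨ ρ = q) := by
  -- doors of the room
  have hdoor : ∀ q : Finset X × Finset I, Inc (S, C) q ↔
      (∃ s ∈ S, q = (S.erase s, C)) ∨ (∃ j ∉ C, q = (S, insert j C)) := by
    rintro ⟨T, D⟩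
    constructor
    · rintro (⟨x, hx, h⟩ | ⟨j, hj, h⟩)
      · simp only [Prod.mk.injEq] at h hx; obtain ⟨rfl, rfl⟩ := h
        left
        exact ⟨x, Finset.mem_insert_self _ _, by simp [Finset.erase_insert hx]⟩
      · simp only [Prod.mk.injEq] at h hj; obtain ⟨rfl, rfl⟩ := h
        right
        exact ⟨j, by simp, by simp [Finset.insert_erase hj]⟩
    · rintro (⟨x, hx, h⟩ | ⟨j, hj, h⟩)
      · simp only [Prod.mk.injEq] at h; obtain ⟨rfl, rfl⟩ := h
        left
        exact ⟨x, by simp, by simp [Finset.insert_erase hx]⟩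
      · simp only [Prod.mk.injEq] at h; obtain ⟨rfl, rfl⟩ := h
        right
        exact ⟨j, by simp, by simp [Finset.erase_insert hj]⟩
  by_cases hi0 : i0 ∈ C
  swap
  · left
    rintro q ⟨⟨h1, h2, h3⟩, h4⟩
    rcases (hdoor q).1 h4 with ⟨s, hs, rfl⟩ | ⟨j, hj, rfl⟩
    · exact hi0 h2
    · simp only [Finset.mem_insert] at h2
      rcases h2 with rfl | h2
      · apply hfull
        simp only at h3
        rw [h3, Finset.erase_insert hj]
      · exact hi0 h2
  have hC1 : (C.erase i0).card + 1 = C.card := Finset.card_erase_add_one hi0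
  have hsp1 : ∀ s ∈ S, Special c i0 (S.erase s, C) ↔ (S.erase s).image c = C.erase i0 := by
    intro s hs
    unfold Special
    simp only [hi0, true_and]
    constructor
    · exact fun h => h.2
    · intro h
      refine ⟨?_, h⟩
      rw [Finset.card_erase_add_one hs, hc]
  have hsp2 : ∀ j ∉ C, Special c i0 (S, insert j C) ↔ S.image c = insert j (C.erase i0) := by
    intro j hj
    have hne : j ≠ i0 := fun h => hj (h ▸ hi0)
    unfold Special
    simp only [Finset.mem_insert, hi0, or_true, true_and]
    rw [Finset.erase_insert_of_ne hne]
    constructor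
    · exact fun h => h.2
    · intro h
      refine ⟨?_, h⟩
      rw [Finset.card_insert_of_notMem hj, hc]
  by_cases hB : S.image c = C.erase i0
  · right
    obtain ⟨a, ha, b, hb, hab, hcab, hk⟩ := pair_lemma c S _ hB (by omega)
    refine ⟨(S.erase a, C), (S.erase b, C), ?_, ?_⟩
    · intro h
      have h1 := (Prod.ext_iff.1 h).1
      simp only at h1
      have : b ∈ S.erase a := by simp [hb, hab.symm]
      rw [h1] at this
      simp at this
    · intro ρ
      constructor
      · rintro ⟨hs, hI⟩
        rcases (hdoor ρ).1 hI with ⟨s, hsS, rfl⟩ | ⟨j, hj, rfl⟩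
        · rcases (hk s hsS).1 ((hsp1 s hsS).1 hs) with rfl | rfl
          · exact Or.inl rfl
          · exact Or.inr rfl
        · have := (hsp2 j hj).1 hs
          rw [hB] at this
          have hj' : j ∈ C.erase i0 := by rw [this]; exact Finset.mem_insert_self _ _
          exact absurd (Finset.mem_of_mem_erase hj') hj
      · rintro (rfl | rfl)
        · exact ⟨(hsp1 a ha).2 ((hk a ha).2 (Or.inl rfl)), (hdoor _).2 (Or.inl ⟨a, ha, rfl⟩)⟩
        · exact ⟨(hsp1 b hb).2 ((hk b hb).2 (Or.inr rfl)), (hdoor _).2 (Or.inl ⟨b, hb, rfl⟩)⟩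
  by_cases hB2 : ∃ j ∉ C, S.image c = insert j (C.erase i0)
  · right
    obtain ⟨j, hj, hBj⟩ := hB2
    have hj' : j ∉ C.erase i0 := fun h => hj (Finset.mem_of_mem_erase h)
    have hinj : Set.InjOn c S := by
      apply Finset.injOn_of_card_image_eq
      rw [hBj, Finset.card_insert_of_notMem hj', hC1, hc]
    have hjB : j ∈ S.image c := by rw [hBj]; exact Finset.mem_insert_self _ _
    obtain ⟨s0, hs0, hcs0⟩ := Finset.mem_image.1 hjB
    refine ⟨(S.erase s0, C), (S, insert j C), ?_, ?_⟩
    · intro h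
      have h1 := (Prod.ext_iff.1 h).1
      simp only at h1
      exact absurd h1 (by simpa using hs0)
    · intro ρ
      constructor
      · rintro ⟨hs, hI⟩
        rcases (hdoor ρ).1 hI with ⟨s, hsS, rfl⟩ | ⟨k, hk, rfl⟩
        · left
          have h1 := (hsp1 s hsS).1 hs
          by_cases hss : s = s0
          · rw [hss]
          · exfalso
            apply hj'
            rw [← h1]
            exact Finset.mem_image.2 ⟨s0, by simp [hs0, Ne.symm hss], hcs0⟩
        · right
          have h1 := (hsp2 k hk).1 hs
          rw [hBj] at h1
          have : j ∈ insert k (C.erase i0) := by rw [← h1]; exact Finset.mem_insert_self _ _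
          rcases Finset.mem_insert.1 this with h | h
          · rw [h]
          · exact absurd h hj'
      · rintro (rfl | rfl)
        · refine ⟨(hsp1 s0 hs0).2 ?_, (hdoor _).2 (Or.inl ⟨s0, hs0, rfl⟩)⟩
          ext y
          constructor
          · intro hy
            obtain ⟨x, hx, rfl⟩ := Finset.mem_image.1 hy
            have hxS := Finset.mem_of_mem_erase hx
            have : c x ∈ insert j (C.erase i0) := by
              rw [← hBj]; exact Finset.mem_image_of_mem c hxS
            rcases Finset.mem_insert.1 this with h | h
            · exact absurd (hinj hxS hs0 (h.trans hcs0.symm)) (Finset.ne_of_mem_erase hx)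
            · exact h
          · intro hy
            have : y ∈ S.image c := by rw [hBj]; exact Finset.mem_insert_of_mem hy
            obtain ⟨x, hx, rfl⟩ := Finset.mem_image.1 this
            refine Finset.mem_image.2 ⟨x, Finset.mem_erase.2 ⟨?_, hx⟩, rfl⟩
            rintro rfl
            exact hj' (hcs0 ▸ hy)
        · exact ⟨(hsp2 j hj).2 hBj, (hdoor _).2 (Or.inr ⟨j, hj, rfl⟩)⟩
  · left
    rintro q ⟨hs, hI⟩
    rcases (hdoor q).1 hI with ⟨s, hsS, rfl⟩ | ⟨k, hk, rfl⟩
    · have h1 := (hsp1 s hsS).1 hs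
      have hSim : S.image c = insert (c s) (C.erase i0) := by
        rw [← h1, ← Finset.image_insert, Finset.insert_erase hsS]
      by_cases h2 : c s ∈ C
      · by_cases h3 : c s = i0
        · apply hfull
          rw [hSim, h3, Finset.insert_erase hi0]
        · apply hB
          rw [hSim, Finset.insert_eq_of_mem (by simp [h2, h3])]
      · exact hB2 ⟨c s, h2, hSim⟩
    · exact hB2 ⟨k, hk, (hsp2 k hk).1 hs⟩

open Classical in
theorem scarf [Fintype X] [Fintype I] [Nonempty X] [Nonempty I] {r : I → X → L}
    (hr : ∀ i, Function.Injective (r i)) (c : X → I) :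
    ∃ (S : Finset X) (C : Finset I), Dom r S C ∧ S.image c = C := by
  by_contra hno
  push Not at hno
  obtain ⟨i0⟩ := ‹Nonempty I›
  let R : Finset (Finset X × Finset I) :=
    Finset.univ.filter (fun p => Dom r p.1 p.2 ∧ p.1.card = p.2.card)
  let Q : Finset (Finset X × Finset I) :=
    Finset.univ.filter (fun q => Dom r q.1 q.2 ∧ Special c i0 q)
  have hsum := Finset.sum_card_bipartiteAbove_eq_sum_card_bipartiteBelow (s := R) (t := Q)
    (Inc (X := X) (I := I))
  have hL : Even (∑ a ∈ R, (Finset.bipartiteAbove Inc Q a).card) := by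
    apply Finset.even_sum
    rintro ⟨S, C⟩ hSC
    simp only [R, Finset.mem_filter, Finset.mem_univ, true_and] at hSC
    have heq : ∀ ρ, ρ ∈ Finset.bipartiteAbove Inc Q (S, C) ↔
        (Special c i0 ρ ∧ Inc (S, C) ρ) := by
      intro ρ
      simp only [Finset.mem_bipartiteAbove, Q, Finset.mem_filter, Finset.mem_univ, true_and]
      constructor
      · exact fun h => ⟨h.1.2, h.2⟩
      · rintro ⟨h1, h2⟩
        refine ⟨⟨?_, h1⟩, h2⟩
        rcases h2 with ⟨x, hx, h⟩ | ⟨j, hj, h⟩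
        · obtain ⟨h3, h4⟩ := Prod.ext_iff.1 h
          simp only at h3 h4
          exact hSC.1.mono (h3 ▸ Finset.subset_insert _ _) (h4 ▸ Finset.Subset.refl _)
        · obtain ⟨h3, h4⟩ := Prod.ext_iff.1 h
          simp only at h3 h4
          exact hSC.1.mono (h3 ▸ Finset.Subset.refl _) (h4 ▸ Finset.erase_subset _ _)
    rcases room_lemma c i0 hSC.2 (hno S C hSC.1) with h | ⟨p, q, hpq, h⟩
    · have : Finset.bipartiteAbove Inc Q (S, C) = ∅ := by
        apply Finset.eq_empty_of_forall_notMem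
        intro ρ hρ
        exact h ρ ((heq ρ).1 hρ)
      rw [this]; simp
    · have : Finset.bipartiteAbove Inc Q (S, C) = {p, q} := by
        ext ρ
        rw [heq, h]; simp
      rw [this, Finset.card_pair hpq]
      exact even_two
  have hrel : ∀ T D, Special c i0 (T, D) → Dom r T D → ∀ ρ,
      ρ ∈ Finset.bipartiteBelow Inc R (T, D) ↔ (Dom r ρ.1 ρ.2 ∧ Inc ρ (T, D)) := by
    intro T D hs hd ρ
    simp only [Finset.mem_bipartiteBelow, R, Finset.mem_filter, Finset.mem_univ, true_and]
    constructor
    · exact fun h => ⟨h.1.1, h.2⟩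
    · rintro ⟨h1, h2⟩
      refine ⟨⟨h1, ?_⟩, h2⟩
      have h5 := hs.1
      rcases h2 with ⟨x, hx, h⟩ | ⟨j, hj, h⟩
      · obtain ⟨h3, h4⟩ := Prod.ext_iff.1 h
        simp only at h3 h4 hx h5
        rw [h3, h4, Finset.card_insert_of_notMem hx, h5]
      · obtain ⟨h3, h4⟩ := Prod.ext_iff.1 h
        simp only at h3 h4 hj h5
        rw [h3, h4, Finset.card_erase_of_mem hj, h5]; rfl
  have hq0 : ((∅ : Finset X), ({i0} : Finset I)) ∈ Q := by
    simp only [Q, Finset.mem_filter, Finset.mem_univ, true_and]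
    exact ⟨fun x => ⟨i0, by simp, by simp⟩, by simp, by simp, by simp⟩
  rw [← Finset.add_sum_erase Q _ hq0] at hsum
  have hE : Even (∑ x ∈ Q.erase ((∅ : Finset X), ({i0} : Finset I)),
      (Finset.bipartiteBelow Inc R x).card) := by
    apply Finset.even_sum
    rintro ⟨T, D⟩ hTD
    rw [Finset.mem_erase] at hTD
    obtain ⟨hne, hTD⟩ := hTD
    simp only [Q, Finset.mem_filter, Finset.mem_univ, true_and] at hTD
    have hT : T.Nonempty := by
      rw [Finset.nonempty_iff_ne_empty]
      rintro rfl
      apply hne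
      have h1 := hTD.2.2.2
      have h2 := hTD.2.2.1
      simp only [Finset.image_empty] at h1 h2
      rw [Prod.mk.injEq]
      refine ⟨rfl, ?_⟩
      rw [← Finset.insert_erase h2, ← h1]; rfl
    obtain ⟨p, q, hpq, h⟩ := door_lemma hr hT hTD.1 hTD.2.1
    have : Finset.bipartiteBelow Inc R (T, D) = {p, q} := by
      ext ρ
      rw [hrel T D hTD.2 hTD.1, h]; simp
    rw [this, Finset.card_pair hpq]
    exact even_two
  have h1 : (Finset.bipartiteBelow Inc R ((∅ : Finset X), ({i0} : Finset I))).card = 1 := by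
    obtain ⟨x, -, hx⟩ := Finset.exists_max_image (Finset.univ : Finset X) (r i0)
      Finset.univ_nonempty
    rw [Finset.card_eq_one]
    refine ⟨({x}, {i0}), ?_⟩
    have hQ := hq0
    simp only [Q, Finset.mem_filter, Finset.mem_univ, true_and] at hQ
    ext ρ
    rw [hrel _ _ hQ.2 hQ.1, Finset.mem_singleton]
    constructor
    · rintro ⟨hd, ⟨y, hy, rfl⟩ | ⟨j, hj, rfl⟩⟩
      · have : y = x := by
          obtain ⟨i, hi, hi'⟩ := hd x
          simp only [Finset.mem_singleton] at hi
          subst hi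
          apply hr i
          exact le_antisymm (hx y (Finset.mem_univ _)) (hi' y (by simp))
        subst this
        rfl
      · simp only [Finset.mem_singleton] at hj
        subst hj
        obtain ⟨i, hi, _⟩ := hd x
        simp at hi
    · rintro rfl
      refine ⟨?_, Or.inl ⟨x, by simp, rfl⟩⟩
      intro y
      exact ⟨i0, by simp, fun s hs => by
        rw [Finset.mem_singleton] at hs; subst hs; exact hx y (Finset.mem_univ _)⟩
  rw [h1] at hsum
  rw [hsum, add_comm, Nat.even_add_one] at hL
  exact hL hE

end Scarf

open MeasureTheory Filter Set

section Brouwer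

lemma brouwer_approx {ι : Type*} [Fintype ι] [Nonempty ι] [DecidableEq ι] (f : (ι → ℝ) → (ι → ℝ))
    (hm : MapsTo f (stdSimplex ℝ ι) (stdSimplex ℝ ι)) (k : ℕ) (hk : 0 < k) :
    ∃ (C : Finset ι), ∃ x0 ∈ stdSimplex ℝ ι, (1 - (Fintype.card ι : ℝ) / k ≤ ∑ i ∈ C, x0 i) ∧
      ∀ i ∈ C, ∃ s ∈ stdSimplex ℝ ι, (∀ j, |s j - x0 j| ≤ (Fintype.card ι : ℝ) / k) ∧
        s i ≤ f s i := by
  classical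
  let X := {a : ι → Fin (k+1) // ∑ i, (a i : ℕ) = k}
  have hmk : ∀ a : ι → ℕ, ∑ i, a i = k → ∃ x : X, ∀ i, (x.1 i : ℕ) = a i := by
    intro a ha
    have hle : ∀ i, a i ≤ k := fun i =>
      (Finset.single_le_sum (f := a) (fun _ _ => Nat.zero_le _) (Finset.mem_univ i)).trans ha.le
    exact ⟨⟨fun i => ⟨a i, Nat.lt_succ_of_le (hle i)⟩, ha⟩, fun i => rfl⟩
  obtain ⟨i0⟩ := ‹Nonempty ι›
  have : Nonempty ι := ⟨i0⟩
  have : Nonempty X := by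
    obtain ⟨x, _⟩ := hmk (Pi.single i0 k) (by simp)
    exact ⟨x⟩
  let pt : X → ι → ℝ := fun x i => (x.1 i : ℕ) / (k : ℝ)
  have hk' : (0:ℝ) < k := by exact_mod_cast hk
  have hpt : ∀ x, pt x ∈ stdSimplex ℝ ι := by
    intro x
    refine ⟨fun i => by positivity, ?_⟩
    simp only [pt]
    rw [← Finset.sum_div, ← Nat.cast_sum, x.2, div_self hk'.ne']
  have hcol : ∀ x : X, ∃ i, pt x i ≤ f (pt x) i := by
    intro x
    by_contra hcon
    push Not at hcon
    have h1 := (hpt x).2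
    have h2 := (hm (hpt x)).2
    have := Finset.sum_lt_sum_of_nonempty (Finset.univ_nonempty (α := ι)) (fun i _ => hcon i)
    rw [h1, h2] at this
    exact lt_irrefl _ this
  choose c hc using hcol
  let r : ι → X → ℕ ×ₗ Fin (Fintype.card X) := fun i x => toLex ((x.1 i : ℕ), Fintype.equivFin X x)
  have hr : ∀ i, Function.Injective (r i) := by
    intro i x y hxy
    have : (((x.1 i : ℕ), Fintype.equivFin X x) : ℕ × Fin (Fintype.card X)) =
      ((y.1 i : ℕ), Fintype.equivFin X y) := toLex.injective hxy
    exact (Fintype.equivFin X).injective (Prod.ext_iff.1 this).2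
  have hrle : ∀ i x y, r i x ≤ r i y → (x.1 i : ℕ) ≤ (y.1 i : ℕ) := by
    intro i x y h
    rw [Prod.Lex.le_iff] at h
    rcases h with h | h
    · exact h.le
    · exact h.1.le
  obtain ⟨S, C, hdom, himg⟩ := scarf hr c
  have hCne : C.Nonempty := by
    obtain ⟨x⟩ := ‹Nonempty X›
    obtain ⟨i, hi, _⟩ := hdom x
    exact ⟨i, hi⟩
  have hSne : S.Nonempty := by
    rw [← himg] at hCne
    exact Finset.image_nonempty.1 hCne
  have hmin : ∀ i, ∃ s ∈ S, ∀ t ∈ S, (s.1 i : ℕ) ≤ (t.1 i : ℕ) := fun i =>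
    Finset.exists_min_image S (fun s => (s.1 i : ℕ)) hSne
  choose m hmS hmle using hmin
  have hbig : k < ∑ i ∈ C, (((m i).1 i : ℕ) + 1) := by
    by_contra hcon
    push Not at hcon
    obtain ⟨i1, hi1⟩ := hCne
    let a : ι → ℕ := fun i => (if i ∈ C then ((m i).1 i : ℕ) + 1 else 0) +
      (if i = i1 then k - ∑ i ∈ C, (((m i).1 i : ℕ) + 1) else 0)
    obtain ⟨x, hx⟩ := hmk a (by
      simp only [a]
      rw [Finset.sum_add_distrib, Finset.sum_ite_eq' , Finset.sum_ite_mem]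
      simp only [Finset.univ_inter, Finset.mem_univ, if_true]
      omega)
    obtain ⟨i, hi, hle⟩ := hdom x
    have := hrle i x (m i) (hle _ (hmS i))
    rw [hx] at this
    simp only [a, hi, if_true] at this
    omega
  have hcard : C.card ≤ Fintype.card ι := Finset.card_le_univ C
  rw [Finset.sum_add_distrib, Finset.sum_const, smul_eq_mul, mul_one] at hbig
  -- bounds
  have hsC : ∀ s ∈ S, ∑ i ∈ C, ((m i).1 i : ℕ) ≤ ∑ i ∈ C, (s.1 i : ℕ) := fun s hs =>
    Finset.sum_le_sum (fun i _ => hmle i s hs)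
  have hbd : ∀ s ∈ S, ∀ j, (if j ∈ C then ((m j).1 j : ℕ) else 0) ≤ s.1 j ∧
      (s.1 j : ℕ) ≤ (if j ∈ C then ((m j).1 j : ℕ) else 0) + Fintype.card ι := by
    intro s hs j
    have hsum := s.2
    by_cases hj : j ∈ C
    · simp only [hj, if_true]
      refine ⟨hmle j s hs, ?_⟩
      have h1 : ∑ i ∈ C, (s.1 i : ℕ) ≤ k := by
        exact (Finset.sum_le_sum_of_subset (Finset.subset_univ _)).trans hsum.le
      have h2 := Finset.add_sum_erase C (fun i => (s.1 i : ℕ)) hj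
      have h3 := Finset.add_sum_erase C (fun i => ((m i).1 i : ℕ)) hj
      have h4 : ∑ i ∈ C.erase j, ((m i).1 i : ℕ) ≤ ∑ i ∈ C.erase j, (s.1 i : ℕ) :=
        Finset.sum_le_sum (fun i _ => hmle i s hs)
      omega
    · simp only [hj, if_false]
      refine ⟨Nat.zero_le _, ?_⟩
      have h1 : ∑ i ∈ insert j C, (s.1 i : ℕ) ≤ k := by
        exact (Finset.sum_le_sum_of_subset (Finset.subset_univ _)).trans hsum.le
      rw [Finset.sum_insert hj] at h1
      have := hsC s hs
      omega
  obtain ⟨x0, hx0⟩ := hSne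
  refine ⟨C, pt x0, hpt x0, ?_, ?_⟩
  · simp only [pt]
    rw [← Finset.sum_div, ← Nat.cast_sum, sub_le_iff_le_add, ← add_div, le_div_iff₀ hk', one_mul]
    have := hsC x0 hx0
    have h2 : k ≤ ∑ i ∈ C, (x0.1 i : ℕ) + Fintype.card ι := by omega
    exact_mod_cast h2
  · intro i hi
    rw [← himg] at hi
    obtain ⟨s, hs, rfl⟩ := Finset.mem_image.1 hi
    refine ⟨pt s, hpt s, ?_, hc s⟩
    intro j
    simp only [pt]
    rw [← sub_div, abs_div, abs_of_pos hk']
    gcongr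
    have h1 := hbd s hs j
    have h2 := hbd x0 hx0 j
    have h3 : (s.1 j : ℕ) ≤ x0.1 j + Fintype.card ι := by omega
    have h4 : (x0.1 j : ℕ) ≤ s.1 j + Fintype.card ι := by omega
    have h3' : ((s.1 j : ℕ) : ℝ) ≤ (x0.1 j : ℕ) + (Fintype.card ι : ℝ) := by exact_mod_cast h3
    have h4' : ((x0.1 j : ℕ) : ℝ) ≤ (s.1 j : ℕ) + (Fintype.card ι : ℝ) := by exact_mod_cast h4
    rw [abs_le]
    constructor <;> linarith

theorem brouwer {ι : Type*} [Fintype ι] [Nonempty ι] (f : (ι → ℝ) → (ι → ℝ))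
    (hf : ContinuousOn f (stdSimplex ℝ ι))
    (hm : MapsTo f (stdSimplex ℝ ι) (stdSimplex ℝ ι)) : ∃ x ∈ stdSimplex ℝ ι, f x = x := by
  classical
  have hcomp := isCompact_stdSimplex ℝ ι
  have hne : (stdSimplex ℝ ι).Nonempty := by
    obtain ⟨i⟩ := ‹Nonempty ι›
    exact ⟨_, single_mem_stdSimplex ℝ i⟩
  obtain ⟨x, hx, hxmin⟩ := hcomp.exists_isMinOn hne
    ((hf.sub continuousOn_id).norm : ContinuousOn (fun x => ‖f x - x‖) _)
  refine ⟨x, hx, ?_⟩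
  by_contra hfx
  have hη : 0 < ‖f x - x‖ := norm_pos_iff.2 (sub_ne_zero.2 hfx)
  set η := ‖f x - x‖ with hηdef
  set n : ℝ := (Fintype.card ι : ℝ) with hn
  have hn1 : 1 ≤ n := by
    rw [hn]; exact_mod_cast Fintype.card_pos
  set ε : ℝ := η / (8 * n) with hε
  have hεpos : 0 < ε := by positivity
  have hεn : ε * (8 * n) = η := by rw [hε]; field_simp
  have huc := hcomp.uniformContinuousOn_of_continuous hf
  rw [Metric.uniformContinuousOn_iff] at huc
  obtain ⟨δ, hδ, huc⟩ := huc ε hεpos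
  obtain ⟨k, hk⟩ := exists_nat_gt (n / min δ ε)
  have hmin : 0 < min δ ε := lt_min hδ hεpos
  have hk0 : (0:ℝ) < k := lt_of_le_of_lt (by positivity) hk
  have hnk : n / k < min δ ε := by
    rw [div_lt_iff₀ hmin] at hk
    rw [div_lt_iff₀ hk0]; linarith
  have hnkδ := hnk.trans_le (min_le_left _ _)
  have hnkε := hnk.trans_le (min_le_right _ _)
  obtain ⟨C, x0, hx0, hsum, hC⟩ := brouwer_approx f hm k (by exact_mod_cast hk0)
  have hfx0 := hm hx0
  have hlow : ∀ i ∈ C, x0 i - 2 * ε ≤ f x0 i := by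
    intro i hi
    obtain ⟨s, hs, hsx, hsi⟩ := hC i hi
    have hd : dist s x0 < δ := by
      rw [dist_pi_lt_iff hδ]
      intro j
      rw [Real.dist_eq]
      exact (hsx j).trans_lt hnkδ
    have hfd := huc s hs x0 hx0 hd
    rw [dist_pi_lt_iff hεpos] at hfd
    have h1 := hfd i
    rw [Real.dist_eq, abs_lt] at h1
    have h2 := hsx i
    rw [abs_le] at h2
    linarith [h1.1, h1.2, h2.1, h2.2]
  have hsubC : ∀ D ⊆ C, ∑ i ∈ D, x0 i - 2 * ε * n ≤ ∑ i ∈ D, f x0 i := by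
    intro D hD
    have h1 : ∑ i ∈ D, (x0 i - 2 * ε) ≤ ∑ i ∈ D, f x0 i :=
      Finset.sum_le_sum (fun i hi => hlow i (hD hi))
    rw [Finset.sum_sub_distrib, Finset.sum_const, nsmul_eq_mul] at h1
    have h2 : (D.card : ℝ) ≤ n := by rw [hn]; exact_mod_cast Finset.card_le_univ D
    nlinarith
  have hle1 : ∀ D : Finset ι, ∀ y ∈ stdSimplex ℝ ι, ∑ i ∈ D, y i ≤ 1 := by
    intro D y hy
    rw [← hy.2]
    exact Finset.sum_le_sum_of_subset_of_nonneg (Finset.subset_univ _) (fun i _ _ => hy.1 i)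
  have hall : ∀ i, |f x0 i - x0 i| ≤ 4 * ε * n := by
    intro i
    have hεn' : ε ≤ ε * n := le_mul_of_one_le_right hεpos.le hn1
    by_cases hi : i ∈ C
    · have h1 := hlow i hi
      have h2 := hsubC (C.erase i) (Finset.erase_subset _ _)
      have h3 := hle1 C _ hfx0
      rw [← Finset.add_sum_erase C _ hi] at h3 hsum
      rw [abs_le]
      constructor <;> linarith
    · have h1 := hle1 (insert i C) _ hfx0
      have h2 := hle1 (insert i C) _ hx0
      rw [Finset.sum_insert hi] at h1 h2
      have h3 := hsubC C (Finset.Subset.refl _)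
      have h4 := hfx0.1 i
      have h5 := hx0.1 i
      rw [abs_le]
      constructor <;> linarith
  have : ‖f x0 - x0‖ ≤ 4 * ε * n := by
    rw [pi_norm_le_iff_of_nonneg (by positivity)]
    intro i
    exact hall i
  have h2 := hxmin hx0
  simp only [Set.mem_ofPred_eq] at h2
  have : η ≤ 4 * ε * n := h2.trans this
  nlinarith

/-- Schauder–Tychonoff in a product of lines. -/
theorem schauder_pi {α : Type*} (K : Set (α → ℝ)) (hK : IsCompact K) (hconv : Convex ℝ K)
    (hne : K.Nonempty) (T : (α → ℝ) → (α → ℝ)) (hT : ContinuousOn T K) (hm : MapsTo T K K) :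
    ∃ g ∈ K, T g = g := by
  classical
  have happrox : ∀ (A : Finset α) (ε : ℝ), 0 < ε → ∃ g ∈ K, ∀ x ∈ A, |T g x - g x| ≤ ε := by
    intro A ε hε
    let U : (α → ℝ) → Set (α → ℝ) := fun y => {g | ∀ x ∈ A, |g x - y x| < ε}
    have hUo : ∀ y, IsOpen (U y) := by
      intro y
      have : U y = ⋂ x ∈ A, {g : α → ℝ | |g x - y x| < ε} := by ext g; simp [U]
      rw [this]
      apply isOpen_biInter_finset
      intro x _
      exact isOpen_lt (by fun_prop) continuous_const
    obtain ⟨t, htK, hcov⟩ := hK.elim_nhds_subcover U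
      (fun y _ => (hUo y).mem_nhds (by intro x _; simpa using hε))
    have htne : t.Nonempty := by
      obtain ⟨g, hg⟩ := hne
      have := hcov hg
      simp only [mem_iUnion] at this
      obtain ⟨y, hy, _⟩ := this
      exact ⟨y, hy⟩
    have : Nonempty t := ⟨⟨_, htne.choose_spec⟩⟩
    -- bump functions
    let lam : (α → ℝ) → (α → ℝ) → ℝ := fun y g => ∏ x ∈ A, max 0 (ε - |g x - y x|)
    have hlam0 : ∀ y g, 0 ≤ lam y g := fun y g => Finset.prod_nonneg (fun x _ => le_max_left _ _)
    have hlamc : ∀ y, Continuous (lam y) := by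
      intro y; simp only [lam]; fun_prop
    have hlampos : ∀ y g, g ∈ U y → 0 < lam y g := by
      intro y g hg
      apply Finset.prod_pos
      intro x hx
      exact lt_max_of_lt_right (by linarith [hg x hx])
    have hlamU : ∀ y g, lam y g ≠ 0 → g ∈ U y := by
      intro y g h x hx
      by_contra hcon
      push Not at hcon
      apply h
      apply Finset.prod_eq_zero hx
      exact max_eq_left (by linarith)
    let Λ : (α → ℝ) → ℝ := fun g => ∑ y : t, lam y g
    have hΛc : Continuous Λ := continuous_finsetSum _ (fun y _ => hlamc y)
    have hΛ : ∀ g ∈ K, 0 < Λ g := by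
      intro g hg
      have := hcov hg
      simp only [mem_iUnion] at this
      obtain ⟨y, hy, hyg⟩ := this
      exact Finset.sum_pos' (fun y _ => hlam0 y g) ⟨⟨y, hy⟩, Finset.mem_univ _, hlampos y g hyg⟩
    let G : (t → ℝ) → (α → ℝ) := fun w => ∑ y : t, w y • (y : α → ℝ)
    have hGc : Continuous G := by
      apply continuous_finsetSum
      intro y _
      exact (continuous_apply y).smul continuous_const
    have hGK : MapsTo G (stdSimplex ℝ t) K := by
      intro w hw
      exact hconv.sum_mem (fun y _ => hw.1 y) hw.2 (fun y _ => htK y y.2)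
    let f : (t → ℝ) → (t → ℝ) := fun w y => lam y (T (G w)) / Λ (T (G w))
    have hTG : ContinuousOn (fun w => T (G w)) (stdSimplex ℝ t) :=
      hT.comp hGc.continuousOn hGK
    have hfc : ContinuousOn f (stdSimplex ℝ t) := by
      rw [continuousOn_pi]
      intro y
      apply ContinuousOn.div
      · exact (hlamc y).comp_continuousOn hTG
      · exact hΛc.comp_continuousOn hTG
      · intro w hw
        exact (hΛ _ (hm (hGK hw))).ne'
    have hfm : MapsTo f (stdSimplex ℝ t) (stdSimplex ℝ t) := by
      intro w hw
      have hpos := hΛ _ (hm (hGK hw))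
      refine ⟨fun y => div_nonneg (hlam0 _ _) hpos.le, ?_⟩
      simp only [f]
      rw [← Finset.sum_div]
      exact div_self hpos.ne'
    obtain ⟨w, hw, hfw⟩ := brouwer f hfc hfm
    refine ⟨G w, hGK hw, ?_⟩
    intro x hx
    have h1 : T (G w) x - G w x = ∑ y : t, w y * (T (G w) x - (y : α → ℝ) x) := by
      simp only [mul_sub, Finset.sum_sub_distrib]
      rw [← Finset.sum_mul, hw.2, one_mul]
      simp [G, Finset.sum_apply]
    rw [h1]
    calc |∑ y : t, w y * (T (G w) x - (y : α → ℝ) x)|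
        ≤ ∑ y : t, |w y * (T (G w) x - (y : α → ℝ) x)| := Finset.abs_sum_le_sum_abs _ _
      _ ≤ ∑ y : t, w y * ε := by
          apply Finset.sum_le_sum
          intro y _
          rw [abs_mul, abs_of_nonneg (hw.1 y)]
          by_cases hwy : w y = 0
          · rw [hwy]; simp
          · apply mul_le_mul_of_nonneg_left _ (hw.1 y)
            have : lam y (T (G w)) ≠ 0 := by
              intro h0
              apply hwy
              rw [← hfw]
              simp only [f, h0, zero_div]
            exact (hlamU _ _ this x hx).le
      _ = ε := by rw [← Finset.sum_mul, hw.2, one_mul]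
  -- compactness
  let Z : (Finset α × {ε : ℝ // 0 < ε}) → Set (α → ℝ) := fun p =>
    K ∩ {g | ∀ x ∈ p.1, |T g x - g x| ≤ p.2}
  have hZc : ∀ p, IsClosed (Z p) := by
    intro p
    have : Z p = K ∩ (fun g => fun x : p.1 => |T g x - g x|) ⁻¹' {h | ∀ x, h x ≤ p.2} := by
      ext g; simp [Z]
    rw [this]
    apply ContinuousOn.preimage_isClosed_of_isClosed _ hK.isClosed
    · have : {h : p.1 → ℝ | ∀ x, h x ≤ p.2} = ⋂ x, {h : p.1 → ℝ | h x ≤ (p.2 : ℝ)} := by ext; simp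
      rw [this]
      exact isClosed_iInter (fun x => isClosed_le (continuous_apply x) continuous_const)
    · rw [continuousOn_pi]
      intro x
      apply ContinuousOn.abs
      apply ContinuousOn.sub
      · exact (continuous_apply (x : α)).comp_continuousOn hT
      · exact (continuous_apply (x : α)).continuousOn
  have hZcomp : ∀ p, IsCompact (Z p) := fun p => hK.of_isClosed_subset (hZc p) inter_subset_left
  have : Nonempty (Finset α × {ε : ℝ // 0 < ε}) := ⟨(∅, ⟨1, one_pos⟩)⟩
  have hZne : (⋂ p, Z p).Nonempty := by
    apply IsCompact.nonempty_iInter_of_directed_nonempty_isCompact_isClosed Z _ _ hZcomp hZc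
    · rintro ⟨A, ε, hε⟩ ⟨B, δ, hδ⟩
      refine ⟨(A ∪ B, ⟨min ε δ, lt_min hε hδ⟩), ?_, ?_⟩
      · rintro g ⟨hg, h⟩
        exact ⟨hg, fun x hx => (h x (Finset.mem_union_left _ hx)).trans (min_le_left _ _)⟩
      · rintro g ⟨hg, h⟩
        exact ⟨hg, fun x hx => (h x (Finset.mem_union_right _ hx)).trans (min_le_right _ _)⟩
    · rintro ⟨A, ε, hε⟩
      obtain ⟨g, hg, h⟩ := happrox A ε hε
      exact ⟨g, hg, h⟩
  obtain ⟨g, hg⟩ := hZne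
  rw [mem_iInter] at hg
  refine ⟨g, (hg (∅, ⟨1, one_pos⟩)).1, ?_⟩
  ext x
  by_contra hcon
  have hpos : 0 < |T g x - g x| := abs_pos.2 (sub_ne_zero.2 hcon)
  have := (hg ({x}, ⟨|T g x - g x| / 2, by positivity⟩)).2 x (by simp)
  simp only at this
  linarith

end Brouwer

open MeasureTheory Filter Set

section Gauss

variable {σ : ℝ}

lemma gq_pos (hσ : 0 < σ) (z : ℝ) : 0 < gq σ z := by
  unfold gq; positivity

lemma gq_cont : Continuous (gq σ) := by
  unfold gq; fun_prop

lemma gq_neg (z : ℝ) : gq σ (-z) = gq σ z := by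
  unfold gq; simp

lemma gq_le (hσ : 0 < σ) (z : ℝ) : gq σ z ≤ gq σ 0 := by
  unfold gq
  apply div_le_div_of_nonneg_right _ (by positivity)
  apply Real.exp_le_exp.2
  apply div_le_div_of_nonneg_right _ (by positivity)
  nlinarith [sq_nonneg z]

lemma gq_eq_pdf (hσ : 0 < σ) (x z : ℝ) :
    gq σ (x - z) = ProbabilityTheory.gaussianPDFReal x (Real.toNNReal (σ ^ 2)) z := by
  unfold gq ProbabilityTheory.gaussianPDFReal
  rw [Real.coe_toNNReal _ (sq_nonneg σ)]
  have h1 : √(2 * Real.pi * σ ^ 2) = σ * √(2 * Real.pi) := by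
    rw [Real.sqrt_mul (by positivity), Real.sqrt_sq hσ.le, mul_comm]
  rw [h1, div_eq_inv_mul]
  congr 2
  ring_nf

lemma gq_int (hσ : 0 < σ) (x : ℝ) : Integrable (fun z => gq σ (x - z)) := by
  simp_rw [gq_eq_pdf hσ]
  exact ProbabilityTheory.integrable_gaussianPDFReal _ _

lemma gq_int0 (hσ : 0 < σ) : Integrable (gq σ) := by
  have := gq_int hσ 0
  simpa [gq_neg] using this

lemma gq_one (hσ : 0 < σ) (x : ℝ) : ∫ z, gq σ (x - z) = 1 := by
  simp_rw [gq_eq_pdf hσ]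
  apply ProbabilityTheory.integral_gaussianPDFReal_eq_one
  intro h
  rw [Real.toNNReal_eq_zero] at h
  have : 0 < σ ^ 2 := by positivity
  linarith

/-- bounded measurable functions -/
def BM (φ : ℝ → ℝ) : Prop := Measurable φ ∧ ∃ C, ∀ z, |φ z| ≤ C

lemma BM.int_mul {φ : ℝ → ℝ} (h : BM φ) (hσ : 0 < σ) (x : ℝ) :
    Integrable (fun z => gq σ (x - z) * φ z) := by
  obtain ⟨hm, C, hC⟩ := h
  exact (gq_int hσ x).mul_bdd hm.aestronglyMeasurable (ae_of_all _ hC)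

lemma BM.int_mul0 {φ : ℝ → ℝ} (h : BM φ) (hσ : 0 < σ) (x : ℝ) :
    Integrable (fun w => gq σ w * φ (x - w)) := by
  obtain ⟨hm, C, hC⟩ := h
  exact (gq_int0 hσ).mul_bdd (hm.comp (measurable_const.sub measurable_id)).aestronglyMeasurable
    (ae_of_all _ (fun w => hC _))

noncomputable def HH (σ : ℝ) (φ : ℝ → ℝ) (x : ℝ) : ℝ := ∫ z, gq σ (x - z) * φ z

lemma HH_eq (φ : ℝ → ℝ) (x : ℝ) : HH σ φ x = ∫ w, gq σ w * φ (x - w) := by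
  unfold HH
  rw [← integral_sub_left_eq_self (fun w => gq σ w * φ (x - w)) volume x]
  simp

lemma HH_mono (hσ : 0 < σ) {φ : ℝ → ℝ} (h : BM φ) (hφ : Monotone φ) : Monotone (HH σ φ) := by
  intro x y hxy
  rw [HH_eq, HH_eq]
  apply integral_mono (h.int_mul0 hσ x) (h.int_mul0 hσ y)
  intro w
  exact mul_le_mul_of_nonneg_left (hφ (by linarith)) (gq_pos hσ w).le

lemma HH_bdd (hσ : 0 < σ) {φ : ℝ → ℝ} {C : ℝ} (hC : ∀ z, |φ z| ≤ C) (x : ℝ) :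
    |HH σ φ x| ≤ C := by
  unfold HH
  rw [← Real.norm_eq_abs]
  calc ‖∫ z, gq σ (x - z) * φ z‖ ≤ ∫ z, gq σ (x - z) * C := by
        apply norm_integral_le_of_norm_le ((gq_int hσ x).mul_const C)
        refine ae_of_all _ fun z => ?_
        rw [norm_mul, Real.norm_eq_abs, Real.norm_eq_abs, abs_of_pos (gq_pos hσ _)]
        exact mul_le_mul_of_nonneg_left (hC z) (gq_pos hσ _).le
    _ = C := by rw [integral_mul_const, gq_one hσ, one_mul]

lemma HH_lip (hσ : 0 < σ) {φ : ℝ → ℝ} {C : ℝ} (hC : ∀ z, |φ z| ≤ C) (hφ : Monotone φ)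
    {x y : ℝ} (hxy : x ≤ y) : HH σ φ y - HH σ φ x ≤ gq σ 0 * (2 * C) * (y - x) := by
  have h : BM φ := ⟨hφ.measurable, C, hC⟩
  rw [HH_eq, HH_eq, ← integral_sub (h.int_mul0 hσ y) (h.int_mul0 hσ x)]
  have hlim := intervalIntegral_tendsto_integral
    ((h.int_mul0 hσ y).sub (h.int_mul0 hσ x)) (tendsto_neg_atTop_atBot) (tendsto_id (α := ℝ))
  refine le_of_tendsto hlim ?_
  filter_upwards [eventually_ge_atTop 0] with R hR
  simp only [id]
  have hanti : ∀ u : ℝ, Antitone (fun w => φ (u - w)) := fun u a b hab => hφ (by linarith)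
  have hii : ∀ u : ℝ, ∀ a b, IntervalIntegrable (fun w => φ (u - w)) volume a b :=
    fun u a b => (hanti u).intervalIntegrable
  calc ∫ w in (-R)..R, (gq σ w * φ (y - w) - gq σ w * φ (x - w))
      ≤ ∫ w in (-R)..R, gq σ 0 * (φ (y - w) - φ (x - w)) := by
        apply intervalIntegral.integral_mono_on (by linarith)
        · exact ((h.int_mul0 hσ y).sub (h.int_mul0 hσ x)).intervalIntegrable
        · exact ((hii y _ _).sub (hii x _ _)).const_mul _
        · intro w _
          rw [← mul_sub]
          exact mul_le_mul_of_nonneg_right (gq_le hσ w) (sub_nonneg.2 (hφ (by linarith)))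
    _ = gq σ 0 * ((∫ w in (y - R)..(y + R), φ w) - ∫ w in (x - R)..(x + R), φ w) := by
        rw [intervalIntegral.integral_const_mul, intervalIntegral.integral_sub (hii y _ _) (hii x _ _),
          intervalIntegral.integral_comp_sub_left, intervalIntegral.integral_comp_sub_left]
        simp only [sub_neg_eq_add]
    _ = gq σ 0 * ((∫ w in (x + R)..(y + R), φ w) - ∫ w in (x - R)..(y - R), φ w) := by
        congr 1
        have e : ∀ a b, IntervalIntegrable φ volume a b := fun a b => hφ.intervalIntegrable
        have e1 := intervalIntegral.integral_add_adjacent_intervals (e (x - R) (y - R)) (e (y - R) (y + R))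
        have e2 := intervalIntegral.integral_add_adjacent_intervals (e (x - R) (x + R)) (e (x + R) (y + R))
        linarith
    _ ≤ gq σ 0 * (2 * C) * (y - x) := by
        rw [mul_assoc]
        apply mul_le_mul_of_nonneg_left _ (gq_pos hσ 0).le
        have b1 := intervalIntegral.norm_integral_le_of_norm_le_const (a := x + R) (b := y + R)
          (f := φ) (C := C) (fun z _ => hC z)
        have b2 := intervalIntegral.norm_integral_le_of_norm_le_const (a := x - R) (b := y - R)
          (f := φ) (C := C) (fun z _ => hC z)
        rw [Real.norm_eq_abs, abs_le] at b1 b2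
        have e1 : |y + R - (x + R)| = y - x := by rw [abs_of_nonneg] <;> linarith
        have e2 : |y - R - (x - R)| = y - x := by rw [abs_of_nonneg] <;> linarith
        rw [e1] at b1
        rw [e2] at b2
        linarith [b1.2, b2.1]

noncomputable def Ker (σ : ℝ) (N : ℕ) (x z : ℝ) : ℝ :=
  (1 / (N:ℝ)) * gq σ (x - z) + (((N:ℝ) - 1) / (N:ℝ)) * gqbar σ x z

noncomputable def TT (σ : ℝ) (N : ℕ) (φ : ℝ → ℝ) (x : ℝ) : ℝ := ∫ z, Ker σ N x z * φ z

lemma gqbar_eq (x z : ℝ) : gqbar σ x z = ∫ t in (0:ℝ)..1, gq σ (t * x - z) := by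
  unfold gqbar
  split_ifs with h
  · subst h
    simp [gq_neg]
  · rw [intervalIntegral.integral_comp_mul_right (fun u => gq σ (u - z)) h]
    simp

lemma prod_int (hσ : 0 < σ) {φ : ℝ → ℝ} (h : BM φ) (x : ℝ) :
    Integrable (fun p : ℝ × ℝ => gq σ (p.2 * x - p.1) * φ p.1)
      (volume.prod (volume.restrict (Ioc (0:ℝ) 1))) := by
  have hmeas : Measurable (fun p : ℝ × ℝ => gq σ (p.2 * x - p.1) * φ p.1) :=
    (gq_cont.measurable.comp (by fun_prop)).mul (h.1.comp measurable_fst)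
  obtain ⟨C, hC⟩ := h.2
  rw [integrable_prod_iff' hmeas.aestronglyMeasurable]
  refine ⟨ae_of_all _ fun t => h.int_mul hσ (t * x), ?_⟩
  apply Integrable.of_bound (C := C)
  · exact (hmeas.norm.stronglyMeasurable.integral_prod_left').aestronglyMeasurable
  · refine ae_of_all _ fun t => ?_
    have := HH_bdd hσ (φ := fun z => |φ z|) (C := C) (by simpa using hC) (t * x)
    unfold HH at this
    rw [Real.norm_eq_abs]
    have e : ∀ z : ℝ, ‖gq σ (t * x - z) * φ z‖ = gq σ (t * x - z) * |φ z| := fun z => by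
      rw [norm_mul, Real.norm_eq_abs, Real.norm_eq_abs, abs_of_pos (gq_pos hσ _)]
    simp only [e]
    exact this

lemma gqbar_int (hσ : 0 < σ) {φ : ℝ → ℝ} (h : BM φ) (x : ℝ) :
    Integrable (fun z => gqbar σ x z * φ z) := by
  have := (prod_int hσ h x).integral_prod_left
  refine this.congr (ae_of_all _ fun z => ?_)
  beta_reduce
  rw [gqbar_eq, intervalIntegral.integral_of_le zero_le_one, ← integral_mul_const]

lemma HH_comp_int (hσ : 0 < σ) {φ : ℝ → ℝ} (h : BM φ) (x : ℝ) :
    IntervalIntegrable (fun t => HH σ φ (t * x)) volume 0 1 := by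
  rw [intervalIntegrable_iff_integrableOn_Ioc_of_le zero_le_one]
  exact (prod_int hσ h x).integral_prod_right

lemma TT_int (hσ : 0 < σ) (N : ℕ) {φ : ℝ → ℝ} (h : BM φ) (x : ℝ) :
    Integrable (fun z => Ker σ N x z * φ z) := by
  unfold Ker
  refine (((h.int_mul hσ x).const_mul (1 / (N:ℝ))).add
    ((gqbar_int hσ h x).const_mul (((N:ℝ) - 1) / (N:ℝ)))).congr (ae_of_all _ fun z => ?_)
  simp only [Pi.add_apply]
  ring

lemma TT_eq (hσ : 0 < σ) (N : ℕ) {φ : ℝ → ℝ} (h : BM φ) (x : ℝ) :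
    TT σ N φ x = (1 / (N:ℝ)) * HH σ φ x + (((N:ℝ) - 1) / (N:ℝ)) *
      ∫ t in (0:ℝ)..1, HH σ φ (t * x) := by
  have h1 : ∫ z, gqbar σ x z * φ z = ∫ t in (0:ℝ)..1, HH σ φ (t * x) := by
    rw [intervalIntegral.integral_of_le zero_le_one]
    unfold HH
    rw [← integral_integral_swap (f := fun z t => gq σ (t * x - z) * φ z) (prod_int hσ h x)]
    congr 1
    ext z
    rw [gqbar_eq, intervalIntegral.integral_of_le zero_le_one, ← integral_mul_const]
  rw [← h1, HH, ← integral_const_mul, ← integral_const_mul, ← integral_add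
    ((h.int_mul hσ x).const_mul _) ((gqbar_int hσ h x).const_mul _)]
  unfold TT Ker
  congr 1
  ext z
  ring

lemma Ker_nonneg (hσ : 0 < σ) {N : ℕ} (hN : 1 ≤ N) (x z : ℝ) : 0 ≤ Ker σ N x z := by
  have : (1:ℝ) ≤ N := by exact_mod_cast hN
  have h2 : 0 ≤ gqbar σ x z := by
    rw [gqbar_eq]
    exact intervalIntegral.integral_nonneg zero_le_one (fun t _ => (gq_pos hσ _).le)
  have h3 := (gq_pos hσ (x - z)).le
  unfold Ker
  have h4 : 0 ≤ ((N:ℝ) - 1) / (N:ℝ) := div_nonneg (by linarith) (by linarith)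
  positivity

lemma TT_le (hσ : 0 < σ) {N : ℕ} (hN : 1 ≤ N) {φ ψ : ℝ → ℝ} (h : BM φ) (h' : BM ψ)
    (hle : ∀ z, φ z ≤ ψ z) (x : ℝ) : TT σ N φ x ≤ TT σ N ψ x :=
  integral_mono (TT_int hσ N h x) (TT_int hσ N h' x)
    (fun z => mul_le_mul_of_nonneg_left (hle z) (Ker_nonneg hσ hN x z))

lemma TT_lin (hσ : 0 < σ) (N : ℕ) {φ ψ : ℝ → ℝ} (h : BM φ) (h' : BM ψ) (a b x : ℝ) :
    TT σ N (fun z => a * φ z + b * ψ z) x = a * TT σ N φ x + b * TT σ N ψ x := by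
  unfold TT
  rw [← integral_const_mul, ← integral_const_mul, ← integral_add
    ((TT_int hσ N h x).const_mul _) ((TT_int hσ N h' x).const_mul _)]
  congr 1
  ext z
  ring

lemma BM_const (c : ℝ) : BM (fun _ => c) := ⟨measurable_const, |c|, fun _ => le_rfl⟩

lemma TT_one (hσ : 0 < σ) {N : ℕ} (hN : 1 ≤ N) (x : ℝ) : TT σ N (fun _ => 1) x = 1 := by
  have h0 : ∀ x, HH σ (fun _ => 1) x = 1 := by
    intro x; unfold HH; simp [gq_one hσ]
  have : (1:ℝ) ≤ N := by exact_mod_cast hN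
  rw [TT_eq hσ N (BM_const 1)]
  simp only [h0, intervalIntegral.integral_const]
  simp
  field_simp
  ring

lemma TT_incr (hσ : 0 < σ) {N : ℕ} (hN : 1 ≤ N) {φ : ℝ → ℝ} (h : BM φ) (hφ : Monotone φ)
    {x y : ℝ} (hxy : x ≤ y) :
    (1 / (N:ℝ)) * (HH σ φ y - HH σ φ x) ≤ TT σ N φ y - TT σ N φ x := by
  have hN' : (1:ℝ) ≤ N := by exact_mod_cast hN
  have h4 : 0 ≤ ((N:ℝ) - 1) / (N:ℝ) := div_nonneg (by linarith) (by linarith)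
  rw [TT_eq hσ N h, TT_eq hσ N h]
  have : ∫ t in (0:ℝ)..1, HH σ φ (t * x) ≤ ∫ t in (0:ℝ)..1, HH σ φ (t * y) := by
    apply intervalIntegral.integral_mono_on zero_le_one (HH_comp_int hσ h x) (HH_comp_int hσ h y)
    intro t ht
    exact HH_mono hσ h hφ (mul_le_mul_of_nonneg_left hxy ht.1)
  have := mul_le_mul_of_nonneg_left this h4
  linarith

lemma TT_mono (hσ : 0 < σ) {N : ℕ} (hN : 1 ≤ N) {φ : ℝ → ℝ} (h : BM φ) (hφ : Monotone φ) :
    Monotone (TT σ N φ) := by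
  intro x y hxy
  have h1 := TT_incr hσ hN h hφ hxy
  have h2 : 0 ≤ (1 / (N:ℝ)) * (HH σ φ y - HH σ φ x) :=
    mul_nonneg (by positivity) (sub_nonneg.2 (HH_mono hσ h hφ hxy))
  linarith

lemma TT_lip (hσ : 0 < σ) {N : ℕ} (hN : 1 ≤ N) {φ : ℝ → ℝ} {C : ℝ} (hC : ∀ z, |φ z| ≤ C)
    (hφ : Monotone φ) (K : NNReal) (hK : gq σ 0 * (2 * C) ≤ K) : LipschitzWith K (TT σ N φ) := by
  have h : BM φ := ⟨hφ.measurable, C, hC⟩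
  have hN' : (1:ℝ) ≤ N := by exact_mod_cast hN
  have h4 : 0 ≤ ((N:ℝ) - 1) / (N:ℝ) := div_nonneg (by linarith) (by linarith)
  have hL : ∀ x y, x ≤ y → TT σ N φ y - TT σ N φ x ≤ K * (y - x) := by
    intro x y hxy
    have hlip : ∀ x y, x ≤ y → HH σ φ y - HH σ φ x ≤ K * (y - x) := fun x y hxy =>
      (HH_lip hσ hC hφ hxy).trans (mul_le_mul_of_nonneg_right hK (sub_nonneg.2 hxy))
    rw [TT_eq hσ N h, TT_eq hσ N h]
    have h1 : ∫ t in (0:ℝ)..1, (HH σ φ (t * y) - HH σ φ (t * x)) ≤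
        ∫ t in (0:ℝ)..1, (K:ℝ) * (y - x) := by
      apply intervalIntegral.integral_mono_on zero_le_one
        ((HH_comp_int hσ h y).sub (HH_comp_int hσ h x)) (by simp)
      intro t ht
      have := hlip (t * x) (t * y) (mul_le_mul_of_nonneg_left hxy ht.1)
      refine this.trans ?_
      apply mul_le_mul_of_nonneg_left _ K.2
      nlinarith [ht.1, ht.2]
    rw [intervalIntegral.integral_sub (HH_comp_int hσ h y) (HH_comp_int hσ h x),
      intervalIntegral.integral_const] at h1
    simp only [sub_zero, one_smul] at h1
    have h5 := mul_le_mul_of_nonneg_left h1 h4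
    have h6 := mul_le_mul_of_nonneg_left (hlip x y hxy) (by positivity : 0 ≤ 1 / (N:ℝ))
    have h7 : 1 / (N:ℝ) + ((N:ℝ) - 1) / (N:ℝ) = 1 := by field_simp; ring
    have h8 : 1 / (N:ℝ) * (K * (y - x)) + ((N:ℝ) - 1) / (N:ℝ) * (K * (y - x)) = K * (y - x) := by
      rw [← add_mul, h7, one_mul]
    linarith
  apply LipschitzWith.of_dist_le_mul
  intro x y
  rw [Real.dist_eq, Real.dist_eq]
  rcases le_total x y with hxy | hxy
  · rw [abs_sub_comm, abs_sub_comm x y, abs_of_nonneg (sub_nonneg.2 (TT_mono hσ hN h hφ hxy)),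
      abs_of_nonneg (sub_nonneg.2 hxy)]
    exact hL x y hxy
  · rw [abs_of_nonneg (sub_nonneg.2 (TT_mono hσ hN h hφ hxy)),
      abs_of_nonneg (sub_nonneg.2 hxy)]
    exact hL y x hxy

noncomputable def stp (z : ℝ) : ℝ := if 0 ≤ z then 1 else 0

lemma stp_mono : Monotone stp := by
  intro x y h
  unfold stp
  split_ifs <;> linarith

lemma BM_stp : BM stp := by
  refine ⟨stp_mono.measurable, 1, fun z => ?_⟩
  unfold stp
  split_ifs <;> simp

noncomputable def sfun (σ : ℝ) (N : ℕ) (x : ℝ) : ℝ := TT σ N stp x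

lemma sfun_strict (hσ : 0 < σ) {N : ℕ} (hN : 1 ≤ N) : StrictMono (sfun σ N) := by
  intro x y hxy
  have h1 := TT_incr hσ hN BM_stp stp_mono hxy.le
  have h2 : 0 < HH σ stp y - HH σ stp x := by
    rw [HH_eq, HH_eq, ← integral_sub (BM_stp.int_mul0 hσ y) (BM_stp.int_mul0 hσ x)]
    rw [integral_pos_iff_support_of_nonneg]
    · have hsub : Ioo x y ⊆ Function.support
          (fun w => gq σ w * stp (y - w) - gq σ w * stp (x - w)) := by
        intro w hw
        have e1 : stp (y - w) = 1 := if_pos (by linarith [hw.2])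
        have e2 : stp (x - w) = 0 := if_neg (by linarith [hw.1])
        simp only [Function.mem_support, e1, e2]
        have := gq_pos hσ w
        simpa using this.ne'
      refine lt_of_lt_of_le ?_ (measure_mono hsub)
      simp [hxy]
    · intro w
      simp only [Pi.zero_apply]
      rw [← mul_sub]
      exact mul_nonneg (gq_pos hσ w).le (sub_nonneg.2 (stp_mono (by linarith)))
    · exact (BM_stp.int_mul0 hσ y).sub (BM_stp.int_mul0 hσ x)
  have h3 : (0:ℝ) < 1 / (N:ℝ) := by
    have : (1:ℝ) ≤ N := by exact_mod_cast hN
    positivity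
  have := mul_pos h3 h2
  unfold sfun
  linarith

lemma sfun_mem (hσ : 0 < σ) {N : ℕ} (hN : 1 ≤ N) (x : ℝ) : 0 < sfun σ N x ∧ sfun σ N x < 1 := by
  have h0 : ∀ x, 0 ≤ sfun σ N x := by
    intro x
    apply integral_nonneg
    intro z
    refine mul_nonneg (Ker_nonneg hσ hN x z) ?_
    unfold stp; split_ifs <;> norm_num
  have h1 : ∀ x, sfun σ N x ≤ 1 := by
    intro x
    rw [← TT_one hσ hN x]
    apply TT_le hσ hN BM_stp (BM_const 1)
    intro z
    unfold stp; split_ifs <;> norm_num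
  exact ⟨(h0 (x - 1)).trans_lt (sfun_strict hσ hN (by linarith)),
    (sfun_strict hσ hN (by linarith : x < x + 1)).trans_le (h1 _)⟩

lemma gq_tp2 (hσ : 0 < σ) {x x' z z' : ℝ} (hx : x ≤ x') (hz : z' ≤ z) :
    gq σ (x - z) * gq σ (x' - z') ≤ gq σ (x' - z) * gq σ (x - z') := by
  unfold gq
  rw [div_mul_div_comm, div_mul_div_comm, ← Real.exp_add, ← Real.exp_add]
  apply div_le_div_of_nonneg_right _ (by positivity)
  apply Real.exp_le_exp.2
  rw [← add_div, ← add_div]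
  apply div_le_div_of_nonneg_right _ (by positivity)
  nlinarith [mul_nonneg (sub_nonneg.2 hx) (sub_nonneg.2 hz)]

lemma mlr (hσ : 0 < σ) {a b : ℝ → ℝ} (ha : BM a) (hb : BM b)
    (hab : ∀ z z', z ≤ z' → a z * b z' ≤ a z' * b z) {x x' : ℝ} (hx : x ≤ x') :
    (∫ z, a z * gq σ (x - z)) * (∫ z, b z * gq σ (x' - z)) ≤
      (∫ z, a z * gq σ (x' - z)) * (∫ z, b z * gq σ (x - z)) := by
  have hi : ∀ {c : ℝ → ℝ}, BM c → ∀ x, Integrable (fun z => c z * gq σ (x - z)) := by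
    intro c hc x
    simpa [mul_comm] using hc.int_mul hσ x
  let k : ℝ × ℝ → ℝ := fun p => (a p.1 * gq σ (x' - p.1)) * (b p.2 * gq σ (x - p.2)) -
    (a p.1 * gq σ (x - p.1)) * (b p.2 * gq σ (x' - p.2))
  have i1 := (hi ha x').mul_prod (hi hb x)
  have i2 := (hi ha x).mul_prod (hi hb x')
  have hk : Integrable k (volume.prod volume) := i1.sub i2
  have e1 : ∫ p, k p ∂(volume.prod volume) = (∫ z, a z * gq σ (x' - z)) * (∫ z, b z * gq σ (x - z))
      - (∫ z, a z * gq σ (x - z)) * (∫ z, b z * gq σ (x' - z)) := by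
    rw [← integral_prod_mul, ← integral_prod_mul, ← integral_sub i1 i2]
  have e2 : ∫ p : ℝ × ℝ, k p.swap ∂(volume.prod volume) = ∫ p, k p ∂(volume.prod volume) :=
    integral_prod_swap k
  have e3 : 0 ≤ ∫ p : ℝ × ℝ, (k p + k p.swap) ∂(volume.prod volume) := by
    apply integral_nonneg
    rintro ⟨z, z'⟩
    simp only [k, Pi.zero_apply, Prod.fst_swap, Prod.snd_swap]
    have : a z * gq σ (x' - z) * (b z' * gq σ (x - z')) - a z * gq σ (x - z) * (b z' * gq σ (x' - z'))
      + (a z' * gq σ (x' - z') * (b z * gq σ (x - z)) - a z' * gq σ (x - z') * (b z * gq σ (x' - z)))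
      = (a z * b z' - a z' * b z) * (gq σ (x' - z) * gq σ (x - z') - gq σ (x - z) * gq σ (x' - z')) := by
      ring
    rw [this]
    rcases le_total z z' with h | h
    · have h1 := gq_tp2 hσ hx h
      have h2 := hab z z' h
      apply mul_nonneg_of_nonpos_of_nonpos <;> linarith
    · have h1 := gq_tp2 hσ hx h
      have h2 := hab z' z h
      apply mul_nonneg <;> linarith
  have hks : Integrable (fun p : ℝ × ℝ => k p.swap) (volume.prod volume) := hk.swap
  rw [integral_add hk hks, e2, e1] at e3
  linarith

end Gauss

open MeasureTheory Filter Set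

section Prob

variable {Ω : Type*} [MeasurableSpace Ω] {P : Measure Ω} [IsProbabilityMeasure P]
    {V : Ω → ℝ}

lemma ite_int (hVm : Measurable V) (hV : Integrable V P) (c y : ℝ) :
    Integrable (fun ω => if V ω > y then V ω - c else 0) P := by
  have := (hV.sub (integrable_const c)).indicator (measurableSet_lt measurable_const hVm : MeasurableSet {ω | y < V ω})
  refine this.congr (ae_of_all _ fun ω => ?_)
  simp [indicator]

lemma Phip_sub (hVm : Measurable V) (hV : Integrable V P) (c y : ℝ) :
    Phip P V y - c * Pip P V y = ∫ ω, (if V ω > y then V ω - c else 0) ∂P := by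
  have hs : MeasurableSet {ω | V ω > y} := measurableSet_lt measurable_const hVm
  have : (fun ω => (if V ω > y then V ω - c else 0)) = indicator {ω | V ω > y} (fun ω => V ω - c) := by
    ext ω; simp [indicator]
  rw [this, integral_indicator hs, integral_sub hV.integrableOn (integrable_const c).integrableOn]
  simp [Phip, Pip, Measure.real, mul_comm]

lemma Pip_nonneg (y : ℝ) : 0 ≤ Pip P V y := ENNReal.toReal_nonneg

lemma Pip_le_one (y : ℝ) : Pip P V y ≤ 1 := by
  have := prob_le_one (μ := P) (s := {ω | V ω > y})
  exact ENNReal.toReal_le_of_le_ofReal zero_le_one (by simpa using this)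

lemma Pip_anti : Antitone (Pip P V) := by
  intro y y' h
  apply ENNReal.toReal_mono (measure_ne_top _ _)
  apply measure_mono
  intro ω hω
  exact lt_of_le_of_lt h hω

lemma Pim_eq (hVm : Measurable V) (y : ℝ) : Pim P V y = 1 - Pip P V y := by
  have hs : MeasurableSet {ω | V ω > y} := measurableSet_lt measurable_const hVm
  have h := prob_compl_eq_one_sub (μ := P) hs
  have e : {ω | V ω ≤ y} = {ω | V ω > y}ᶜ := by ext ω; simp
  unfold Pim Pip
  rw [e, h, ENNReal.toReal_sub_of_le prob_le_one (by simp)]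
  simp

lemma Phim_eq (hVm : Measurable V) (hV : Integrable V P) (y : ℝ) :
    Phim P V y = (∫ ω, V ω ∂P) - Phip P V y := by
  have hs : MeasurableSet {ω | V ω > y} := measurableSet_lt measurable_const hVm
  have e : {ω | V ω ≤ y} = {ω | V ω > y}ᶜ := by ext ω; simp
  have := integral_add_compl hs hV
  unfold Phim Phip
  rw [e]
  linarith

lemma G_incr (hVm : Measurable V) (hV : Integrable V P) {c y y' : ℝ} (h : y ≤ y') (h' : y' ≤ c) :
    Phip P V y - c * Pip P V y ≤ Phip P V y' - c * Pip P V y' := by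
  rw [Phip_sub hVm hV, Phip_sub hVm hV]
  apply integral_mono (ite_int hVm hV c y) (ite_int hVm hV c y')
  intro ω
  beta_reduce
  split_ifs <;> linarith

lemma G_decr (hVm : Measurable V) (hV : Integrable V P) {c y y' : ℝ} (h : y ≤ y') (h' : c ≤ y) :
    Phip P V y' - c * Pip P V y' ≤ Phip P V y - c * Pip P V y := by
  rw [Phip_sub hVm hV, Phip_sub hVm hV]
  apply integral_mono (ite_int hVm hV c y') (ite_int hVm hV c y)
  intro ω
  beta_reduce
  split_ifs <;> linarith

lemma G_nonneg (hVm : Measurable V) (hV : Integrable V P) {c y : ℝ} (h' : c ≤ y) :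
    0 ≤ Phip P V y - c * Pip P V y := by
  rw [Phip_sub hVm hV]
  apply integral_nonneg
  intro ω
  simp only [Pi.zero_apply]
  split_ifs <;> linarith

lemma G_ge (hVm : Measurable V) (hV : Integrable V P) {c y : ℝ} (h' : y ≤ c) :
    (∫ ω, V ω ∂P) - c ≤ Phip P V y - c * Pip P V y := by
  rw [Phip_sub hVm hV]
  have : ∫ ω, (V ω - c) ∂P = (∫ ω, V ω ∂P) - c := by
    rw [integral_sub hV (integrable_const c)]; simp
  rw [← this]
  apply integral_mono (hV.sub (integrable_const c)) (ite_int hVm hV c y)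
  intro ω
  simp only [Pi.sub_apply]
  split_ifs <;> linarith

lemma cross_p (hVm : Measurable V) (hV : Integrable V P) {y y' : ℝ} (h : y ≤ y') :
    Phip P V y * Pip P V y' ≤ Phip P V y' * Pip P V y := by
  have h1 := G_incr hVm hV h le_rfl
  have h2 := G_nonneg hVm hV (le_refl y')
  have h3 := Pip_nonneg (P := P) (V := V) y'
  have h4 := Pip_anti (P := P) (V := V) h
  nlinarith [mul_nonneg (sub_nonneg.2 h4) h2, mul_nonneg h3 (sub_nonneg.2 h1)]

lemma cross_m (hVm : Measurable V) (hV : Integrable V P) {y y' : ℝ} (h : y ≤ y') :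
    Phim P V y * Pim P V y' ≤ Phim P V y' * Pim P V y := by
  have h1 := G_decr hVm hV h le_rfl
  have h2 := G_ge hVm hV (le_refl y)
  have h3 := Pip_le_one (P := P) (V := V) y
  have h4 := Pip_anti (P := P) (V := V) h
  rw [Phim_eq hVm hV, Phim_eq hVm hV, Pim_eq hVm, Pim_eq hVm]
  set v := ∫ ω, V ω ∂P
  nlinarith [mul_nonneg (sub_nonneg.2 h4) (sub_nonneg.2 h2), mul_nonneg (sub_nonneg.2 h3) (sub_nonneg.2 h1)]

lemma D_nonneg (hVm : Measurable V) (hV : Integrable V P) (y : ℝ) :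
    0 ≤ Phip P V y - (∫ ω, V ω ∂P) * Pip P V y := by
  rcases le_total y (∫ ω, V ω ∂P) with h | h
  · have := G_ge hVm hV h
    linarith
  · exact G_nonneg hVm hV h

lemma D_min (hVm : Measurable V) (hV : Integrable V P) {a b y : ℝ} (ha : a ≤ y) (hb : y ≤ b) :
    min (Phip P V a - (∫ ω, V ω ∂P) * Pip P V a) (Phip P V b - (∫ ω, V ω ∂P) * Pip P V b) ≤
      Phip P V y - (∫ ω, V ω ∂P) * Pip P V y := by
  rcases le_total y (∫ ω, V ω ∂P) with h | h
  · exact (min_le_left _ _).trans (G_incr hVm hV ha h)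
  · exact (min_le_right _ _).trans (G_decr hVm hV hb h)

variable {m M : ℝ}

lemma Pip_pos (hs : SuppIoo P V m M) {y : ℝ} (hy : y < M) : 0 < Pip P V y :=
  ENNReal.toReal_pos (hs.2.2.1 y hy).ne' (measure_ne_top _ _)

lemma Pim_pos (hs : SuppIoo P V m M) {y : ℝ} (hy : m < y) : 0 < Pim P V y :=
  ENNReal.toReal_pos (hs.2.2.2 y hy).ne' (measure_ne_top _ _)

lemma D_pos_left (hVm : Measurable V) (hV : Integrable V P) (hs : SuppIoo P V m M) {a : ℝ}
    (h1 : m < a) (h2 : a < ∫ ω, V ω ∂P) :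
    0 < Phip P V a - (∫ ω, V ω ∂P) * Pip P V a := by
  have h3 := G_ge hVm hV (le_refl a)
  have h4 := Pim_pos hs h1
  rw [Pim_eq hVm] at h4
  nlinarith [mul_pos (sub_pos.2 h2) h4]

lemma D_pos_right (hVm : Measurable V) (hV : Integrable V P) (hs : SuppIoo P V m M) {b : ℝ}
    (h1 : b < M) (h2 : ∫ ω, V ω ∂P < b) :
    0 < Phip P V b - (∫ ω, V ω ∂P) * Pip P V b := by
  have h3 := G_nonneg hVm hV (le_refl b)
  have h4 := Pip_pos hs h1
  nlinarith [mul_pos (sub_pos.2 h2) h4]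

lemma Phip_le (hVm : Measurable V) (hV : Integrable V P) (hs : SuppIoo P V m M) (y : ℝ) :
    Phip P V y ≤ M * Pip P V y := by
  rw [← sub_nonpos, Phip_sub hVm hV]
  apply integral_nonpos_of_ae
  filter_upwards [hs.2.1] with ω hω
  simp only [Pi.zero_apply]
  split_ifs <;> linarith [hω.2]

lemma Gm_anti (hVm : Measurable V) (hV : Integrable V P) (hs : SuppIoo P V m M) :
    Antitone (fun y => Phip P V y - m * Pip P V y) := by
  intro y y' h
  beta_reduce
  rw [Phip_sub hVm hV, Phip_sub hVm hV]
  apply integral_mono_ae (ite_int hVm hV m y') (ite_int hVm hV m y)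
  filter_upwards [hs.2.1] with ω hω
  split_ifs <;> linarith [hω.1]

lemma Phim_ge (hVm : Measurable V) (hV : Integrable V P) (hs : SuppIoo P V m M) (y : ℝ) :
    m * Pim P V y ≤ Phim P V y := by
  rw [Phim_eq hVm hV, Pim_eq hVm]
  have : Phip P V y - m * Pip P V y ≤ (∫ ω, V ω ∂P) - m := by
    have e : ∫ ω, (V ω - m) ∂P = (∫ ω, V ω ∂P) - m := by
      rw [integral_sub hV (integrable_const m)]; simp
    rw [← e, Phip_sub hVm hV]
    apply integral_mono_ae (ite_int hVm hV m y) (hV.sub (integrable_const m))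
    filter_upwards [hs.2.1] with ω hω
    simp only [Pi.sub_apply]
    split_ifs <;> linarith [hω.1]
  linarith

lemma v_lt (hVm : Measurable V) (hV : Integrable V P) (hs : SuppIoo P V m M) :
    ∫ ω, V ω ∂P < M := by
  have hmM := hs.1
  have h0 : (m + M) / 2 < M := by linarith
  have h1 := Phip_le hVm hV hs ((m + M) / 2)
  have h2 := G_ge hVm hV (le_refl ((m + M) / 2))
  have h3 := Pim_pos hs (show m < (m + M) / 2 by linarith)
  rw [Pim_eq hVm] at h3
  nlinarith [mul_pos (sub_pos.2 h0) h3]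

lemma v_gt (hVm : Measurable V) (hV : Integrable V P) (hs : SuppIoo P V m M) :
    m < ∫ ω, V ω ∂P := by
  have hmM := hs.1
  have h0 : m < (m + M) / 2 := by linarith
  have h1 := Phim_ge hVm hV hs ((m + M) / 2)
  have h2 := G_nonneg hVm hV (le_refl ((m + M) / 2))
  have h3 := Pip_pos hs (show (m + M) / 2 < M by linarith)
  rw [Pim_eq hVm, Phim_eq hVm hV] at h1
  nlinarith [mul_pos (sub_pos.2 h0) h3]

lemma Pip_meas : Measurable (Pip P V) := Pip_anti.measurable

lemma Phip_meas (hVm : Measurable V) (hV : Integrable V P) (hs : SuppIoo P V m M) :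
    Measurable (Phip P V) := by
  have h := (Gm_anti hVm hV hs).measurable.add ((Pip_meas (P := P) (V := V)).const_mul m)
  refine (congrArg Measurable ?_).mp h
  ext y; simp

lemma Phip_abs (y : ℝ) (hV : Integrable V P) : |Phip P V y| ≤ ∫ ω, |V ω| ∂P := by
  unfold Phip
  refine (abs_integral_le_integral_abs).trans ?_
  exact setIntegral_le_integral hV.abs (ae_of_all _ fun ω => abs_nonneg _)

lemma Pip_abs (y : ℝ) : |Pip P V y| ≤ 1 := by
  rw [abs_of_nonneg (Pip_nonneg y)]; exact Pip_le_one y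

/-- countable exceptional set -/
lemma disc_countable (hVm : Measurable V) (hV : Integrable V P) (hs : SuppIoo P V m M) :
    ∃ S : Set ℝ, S.Countable ∧ ∀ y ∉ S, ContinuousAt (Phip P V) y ∧ ContinuousAt (Pip P V) y := by
  refine ⟨_, (Gm_anti hVm hV hs).countable_not_continuousAt.union
    (Pip_anti (P := P) (V := V)).countable_not_continuousAt, fun y hy => ?_⟩
  simp only [mem_union, Set.mem_ofPred_eq, not_or, not_not] at hy
  refine ⟨?_, hy.2⟩
  have h := hy.1.add (hy.2.const_mul m)
  refine h.congr (Eventually.of_forall fun z => ?_)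
  simp

end Prob

open MeasureTheory Filter Set

section Phi

variable {Ω : Type*} [MeasurableSpace Ω] {P : Measure Ω} [IsProbabilityMeasure P]
    {V : Ω → ℝ} {m M σ : ℝ}

lemma BM.int_mul' {c : ℝ → ℝ} (hc : BM c) (hσ : 0 < σ) (x : ℝ) :
    Integrable (fun z => c z * gq σ (x - z)) := by
  simpa [mul_comm] using hc.int_mul hσ x

lemma conv_pos (hσ : 0 < σ) {c : ℝ → ℝ} (hc : BM c) (hp : ∀ z, 0 < c z) (x : ℝ) :
    0 < ∫ z, c z * gq σ (x - z) := by
  rw [integral_pos_iff_support_of_nonneg]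
  · have : Function.support (fun z => c z * gq σ (x - z)) = univ := by
      ext z
      simp only [Function.mem_support, mem_univ, iff_true]
      exact (mul_pos (hp z) (gq_pos hσ _)).ne'
    rw [this]
    simp
  · intro z
    exact (mul_pos (hp z) (gq_pos hσ _)).le
  · exact hc.int_mul' hσ x

lemma BM_Pip {g : ℝ → ℝ} (hg : Measurable g) : BM (fun z => Pip P V (g z)) :=
  ⟨Pip_meas.comp hg, 1, fun _ => Pip_abs _⟩

lemma BM_Phip (hVm : Measurable V) (hV : Integrable V P) (hs : SuppIoo P V m M)
    {g : ℝ → ℝ} (hg : Measurable g) : BM (fun z => Phip P V (g z)) :=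
  ⟨(Phip_meas hVm hV hs).comp hg, _, fun _ => Phip_abs _ hV⟩

lemma BM.sub_c {c : ℝ → ℝ} (hc : BM c) (k : ℝ) : BM (fun z => k - c z) := by
  obtain ⟨h1, C, h2⟩ := hc
  exact ⟨h1.const_sub k, |k| + C, fun z => (abs_sub _ _).trans (by linarith [h2 z])⟩

lemma BM_Pim (hVm : Measurable V) {g : ℝ → ℝ} (hg : Measurable g) :
    BM (fun z => Pim P V (g z)) := by
  simp_rw [Pim_eq hVm]
  exact (BM_Pip hg).sub_c 1

lemma BM_Phim (hVm : Measurable V) (hV : Integrable V P) (hs : SuppIoo P V m M)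
    {g : ℝ → ℝ} (hg : Measurable g) : BM (fun z => Phim P V (g z)) := by
  simp_rw [Phim_eq hVm hV]
  exact (BM_Phip hVm hV hs hg).sub_c _

lemma phip_mono (hVm : Measurable V) (hV : Integrable V P) (hs : SuppIoo P V m M)
    (hσ : 0 < σ) {g : ℝ → ℝ} (hg : Monotone g) (hM : ∀ z, g z < M) : Monotone (phip P V σ g) := by
  intro x x' hx
  have h := mlr hσ (BM_Phip hVm hV hs hg.measurable) (BM_Pip (P := P) (V := V) hg.measurable)
    (fun z z' h => cross_p hVm hV (hg h)) hx
  have p := conv_pos hσ (BM_Pip (P := P) (V := V) hg.measurable) (fun z => Pip_pos hs (hM z))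
  unfold phip
  rw [div_le_div_iff₀ (p x) (p x')]
  exact h

lemma phim_mono (hVm : Measurable V) (hV : Integrable V P) (hs : SuppIoo P V m M)
    (hσ : 0 < σ) {g : ℝ → ℝ} (hg : Monotone g) (hm : ∀ z, m < g z) : Monotone (phim P V σ g) := by
  intro x x' hx
  have h := mlr hσ (BM_Phim hVm hV hs hg.measurable) (BM_Pim hVm (P := P) (V := V) hg.measurable)
    (fun z z' h => cross_m hVm hV (hg h)) hx
  have p := conv_pos hσ (BM_Pim hVm (P := P) (V := V) hg.measurable) (fun z => Pim_pos hs (hm z))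
  unfold phim
  rw [div_le_div_iff₀ (p x) (p x')]
  exact h

lemma phip_le_M (hVm : Measurable V) (hV : Integrable V P) (hs : SuppIoo P V m M)
    (hσ : 0 < σ) {g : ℝ → ℝ} (hg : Measurable g) (hM : ∀ z, g z < M) (x : ℝ) :
    phip P V σ g x ≤ M := by
  have p := conv_pos hσ (BM_Pip (P := P) (V := V) hg) (fun z => Pip_pos hs (hM z)) x
  unfold phip
  rw [div_le_iff₀ p, ← integral_const_mul]
  apply integral_mono ((BM_Phip hVm hV hs hg).int_mul' hσ x) (((BM_Pip hg).int_mul' hσ x).const_mul M)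
  intro z
  beta_reduce
  rw [← mul_assoc]
  exact mul_le_mul_of_nonneg_right (Phip_le hVm hV hs _) (gq_pos hσ _).le

lemma phim_ge_m (hVm : Measurable V) (hV : Integrable V P) (hs : SuppIoo P V m M)
    (hσ : 0 < σ) {g : ℝ → ℝ} (hg : Measurable g) (hm : ∀ z, m < g z) (x : ℝ) :
    m ≤ phim P V σ g x := by
  have p := conv_pos hσ (BM_Pim hVm (P := P) (V := V) hg) (fun z => Pim_pos hs (hm z)) x
  unfold phim
  rw [le_div_iff₀ p, ← integral_const_mul]
  apply integral_mono (((BM_Pim hVm hg).int_mul' hσ x).const_mul m) ((BM_Phim hVm hV hs hg).int_mul' hσ x)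
  intro z
  beta_reduce
  rw [← mul_assoc]
  exact mul_le_mul_of_nonneg_right (Phim_ge hVm hV hs _) (gq_pos hσ _).le

lemma phim_le_v (hVm : Measurable V) (hV : Integrable V P) (hs : SuppIoo P V m M)
    (hσ : 0 < σ) {g : ℝ → ℝ} (hg : Measurable g) (hm : ∀ z, m < g z) (x : ℝ) :
    phim P V σ g x ≤ ∫ ω, V ω ∂P := by
  have p := conv_pos hσ (BM_Pim hVm (P := P) (V := V) hg) (fun z => Pim_pos hs (hm z)) x
  unfold phim
  rw [div_le_iff₀ p, ← integral_const_mul]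
  apply integral_mono ((BM_Phim hVm hV hs hg).int_mul' hσ x) (((BM_Pim hVm hg).int_mul' hσ x).const_mul _)
  intro z
  beta_reduce
  rw [← mul_assoc]
  apply mul_le_mul_of_nonneg_right _ (gq_pos hσ _).le
  have := D_nonneg hVm hV (g z)
  rw [Phim_eq hVm hV, Pim_eq hVm]
  linarith

lemma phip_gap (hVm : Measurable V) (hV : Integrable V P) (hs : SuppIoo P V m M)
    (hσ : 0 < σ) {g : ℝ → ℝ} (hg : Measurable g) (hM : ∀ z, g z < M) {a b δ : ℝ}
    (hab : ∀ z ∈ Ioc (-1:ℝ) 1, a ≤ g z ∧ g z ≤ b) (hδ : 0 ≤ δ)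
    (h1 : δ ≤ (min (Phip P V a - (∫ ω, V ω ∂P) * Pip P V a)
      (Phip P V b - (∫ ω, V ω ∂P) * Pip P V b)) * ∫ z in Ioc (-1:ℝ) 1, gq σ (0 - z)) :
    (∫ ω, V ω ∂P) + δ ≤ phip P V σ g 0 := by
  set v := ∫ ω, V ω ∂P with hv
  set d := (min (Phip P V a - v * Pip P V a) (Phip P V b - v * Pip P V b))
  have p := conv_pos hσ (BM_Pip (P := P) (V := V) hg) (fun z => Pip_pos hs (hM z)) 0
  have iA := (BM_Phip hVm hV hs hg).int_mul' hσ 0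
  have iB := (BM_Pip (P := P) (V := V) hg).int_mul' hσ 0
  have hB : ∫ z, Pip P V (g z) * gq σ (0 - z) ≤ 1 := by
    rw [← gq_one hσ 0]
    apply integral_mono iB (gq_int hσ 0)
    intro z
    exact mul_le_of_le_one_left (gq_pos hσ _).le (Pip_le_one _)
  have hA : δ ≤ (∫ z, Phip P V (g z) * gq σ (0 - z)) - v * ∫ z, Pip P V (g z) * gq σ (0 - z) := by
    refine h1.trans ?_
    rw [← integral_const_mul, ← integral_const_mul, ← integral_sub iA (iB.const_mul v),
      ← integral_indicator measurableSet_Ioc]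
    apply integral_mono (((gq_int hσ 0).const_mul d).indicator measurableSet_Ioc)
      (iA.sub (iB.const_mul v))
    intro z
    have hq := (gq_pos hσ (0 - z)).le
    have e : Phip P V (g z) * gq σ (0 - z) - v * (Pip P V (g z) * gq σ (0 - z)) =
      (Phip P V (g z) - v * Pip P V (g z)) * gq σ (0 - z) := by ring
    simp only [Pi.sub_apply]
    rw [e]
    by_cases hz : z ∈ Ioc (-1:ℝ) 1
    · rw [indicator_of_mem hz]
      exact mul_le_mul_of_nonneg_right (D_min hVm hV (hab z hz).1 (hab z hz).2) hq
    · rw [indicator_of_notMem hz]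
      exact mul_nonneg (D_nonneg hVm hV _) hq
  unfold phip
  rw [le_div_iff₀ p]
  nlinarith

end Phi

open MeasureTheory Filter Set

section Main

lemma conv_cont {X : Type*} [TopologicalSpace X] [FirstCountableTopology X] {σ : ℝ} (hσ : 0 < σ)
    (G : X → ℝ → ℝ) (hG : ∀ z, Continuous (fun h => G h z)) (hmono : ∀ h, StrictMono (G h))
    {f : ℝ → ℝ} (hf : BM f) {S : Set ℝ} (hS : S.Countable) (hfS : ∀ y ∉ S, ContinuousAt f y) (x : ℝ) :
    Continuous (fun h => ∫ z, f (G h z) * gq σ (x - z)) := by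
  obtain ⟨hfm, C, hC⟩ := hf
  rw [continuous_iff_continuousAt]
  intro h0
  apply continuousAt_of_dominated (bound := fun z => C * gq σ (x - z))
  · refine Eventually.of_forall fun h => ?_
    exact ((hfm.comp (hmono h).monotone.measurable).mul
      (gq_cont.measurable.comp (measurable_const.sub measurable_id))).aestronglyMeasurable
  · refine Eventually.of_forall fun h => ae_of_all _ fun z => ?_
    rw [norm_mul, Real.norm_eq_abs, Real.norm_eq_abs, abs_of_pos (gq_pos hσ (x - z))]
    exact mul_le_mul_of_nonneg_right (hC _) (gq_pos hσ _).le
  · exact (gq_int hσ x).const_mul C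
  · have hc : ((G h0) ⁻¹' S).Countable := hS.preimage (hmono h0).injective
    have := hc.ae_notMem (volume : Measure ℝ)
    filter_upwards [this] with z hz
    have h1 : ContinuousAt (fun h => f (G h z)) h0 :=
      ContinuousAt.comp (f := fun h => G h z) (g := f) (hfS _ hz) (hG z).continuousAt
    exact h1.mul continuousAt_const

variable {Ω : Type*} [MeasurableSpace Ω] {P : Measure Ω} [IsProbabilityMeasure P]
    {V : Ω → ℝ} {m M σ : ℝ}

lemma phig_good (hVm : Measurable V) (hV : Integrable V P) (hs : SuppIoo P V m M) (hσ : 0 < σ)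
    {g : ℝ → ℝ} (hg : Monotone g) (hr : ∀ z, m < g z ∧ g z < M) {δ : ℝ} (hδ : 0 ≤ δ)
    (hgap : (∫ ω, V ω ∂P) + δ ≤ phip P V σ g 0) :
    Monotone (fun z => phig P V σ g z - δ * stp z) ∧
    (∀ z, m + ((∫ ω, V ω ∂P) - m) * stp z ≤ phig P V σ g z) ∧
    (∀ z, phig P V σ g z ≤ (∫ ω, V ω ∂P) + (M - ∫ ω, V ω ∂P) * stp z) := by
  have h1 := phip_mono hVm hV hs hσ hg (fun z => (hr z).2)
  have h2 := phim_mono hVm hV hs hσ hg (fun z => (hr z).1)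
  have h3 := phip_le_M hVm hV hs hσ hg.measurable (fun z => (hr z).2)
  have h4 := phim_ge_m hVm hV hs hσ hg.measurable (fun z => (hr z).1)
  have h5 := phim_le_v hVm hV hs hσ hg.measurable (fun z => (hr z).1)
  refine ⟨?_, ?_, ?_⟩
  · intro x y hxy
    simp only [phig, stp]
    split_ifs with hx hy hy
    · linarith [h1 hxy]
    · linarith
    · linarith [h1 hy, h5 x]
    · linarith [h2 hxy]
  · intro z
    simp only [phig, stp]
    split_ifs with hx
    · linarith [h1 hx]
    · linarith [h4 z]
  · intro z
    simp only [phig, stp]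
    split_ifs with hx
    · linarith [h3 z]
    · linarith [h5 z]

lemma TT_cont {X : Type*} [TopologicalSpace X] [FirstCountableTopology X]
    (hVm : Measurable V) (hV : Integrable V P) (hs : SuppIoo P V m M) (hσ : 0 < σ)
    (G : X → ℝ → ℝ) (hG : ∀ z, Continuous (fun h => G h z)) (hmono : ∀ h, StrictMono (G h))
    (hr : ∀ h z, m < G h z ∧ G h z < M) {N : ℕ} (hN : 1 ≤ N) {C : ℝ}
    (hφ : ∀ h, BM (phig P V σ (G h))) (hC : ∀ h z, |phig P V σ (G h) z| ≤ C) (x : ℝ) :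
    Continuous (fun h => TT σ N (phig P V σ (G h)) x) := by
  obtain ⟨S, hS, hcS⟩ := disc_countable hVm hV hs
  have hcont : ∀ z, Continuous (fun h => phig P V σ (G h) z) := by
    intro z
    have c1 := conv_cont hσ G hG hmono (BM_Phip hVm hV hs measurable_id) hS (fun y hy => (hcS y hy).1) z
    have c2 := conv_cont hσ G hG hmono (BM_Pip (P := P) (V := V) measurable_id) hS
      (fun y hy => (hcS y hy).2) z
    have c3 := conv_cont hσ G hG hmono (BM_Phim hVm hV hs measurable_id) hS (fun y hy => by
      simp only [Phim_eq hVm hV, id]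
      exact continuousAt_const.sub (hcS y hy).1) z
    have c4 := conv_cont hσ G hG hmono (BM_Pim (P := P) hVm measurable_id) hS (fun y hy => by
      simp only [Pim_eq hVm, id]
      exact continuousAt_const.sub (hcS y hy).2) z
    unfold phig
    split_ifs with hz
    · exact c1.div c2 (fun h => (conv_pos hσ (BM_Pip (hmono h).monotone.measurable)
        (fun w => Pip_pos hs (hr h w).2) z).ne')
    · exact c3.div c4 (fun h => (conv_pos hσ (BM_Pim hVm (hmono h).monotone.measurable)
        (fun w => Pim_pos hs (hr h w).1) z).ne')
  unfold TT
  apply continuous_of_dominated (bound := fun z => Ker σ N x z * C)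
  · exact fun h => (TT_int hσ N (hφ h) x).aestronglyMeasurable
  · refine fun h => ae_of_all _ fun z => ?_
    rw [norm_mul, Real.norm_eq_abs, Real.norm_eq_abs, abs_of_nonneg (Ker_nonneg hσ hN x z)]
    exact mul_le_mul_of_nonneg_left (hC h z) (Ker_nonneg hσ hN x z)
  · exact TT_int hσ N (BM_const C) x
  · exact ae_of_all _ fun z => continuous_const.mul (hcont z)

/-- compact sets of continuous functions are first countable in the topology of pointwise
convergence -/
lemma fc_of_compact {K : Set (ℝ → ℝ)} (hK : IsCompact K) (hc : ∀ g ∈ K, Continuous g) :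
    FirstCountableTopology K := by
  have : CompactSpace K := isCompact_iff_compactSpace.mp hK
  let ρ : K → (ℚ → ℝ) := fun g q => g.1 q
  have hρ : Continuous ρ := by
    apply continuous_pi
    intro q
    exact (continuous_apply (q:ℝ)).comp continuous_subtype_val
  have hinj : Function.Injective ρ := by
    intro g h e
    apply Subtype.ext
    apply Continuous.ext_on Rat.denseRange_cast (hc _ g.2) (hc _ h.2)
    rintro _ ⟨q, rfl⟩
    exact congrFun e q
  have hemb := (hρ.isClosedEmbedding hinj).isEmbedding.isInducing
  exact hemb.firstCountableTopology

/-- the invariant set -/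
def KK (σ : ℝ) (N : ℕ) (m v M δ : ℝ) (L : NNReal) : Set (ℝ → ℝ) :=
  {g | LipschitzWith L g ∧ (∀ x y, x ≤ y → g x - δ * sfun σ N x ≤ g y - δ * sfun σ N y) ∧
    ∀ x, m + (v - m) * sfun σ N x ≤ g x ∧ g x ≤ v + (M - v) * sfun σ N x}

lemma KK_convex (σ : ℝ) (N : ℕ) (m v M δ : ℝ) (L : NNReal) : Convex ℝ (KK σ N m v M δ L) := by
  rintro g ⟨g1, g2, g3⟩ h ⟨h1, h2, h3⟩ a b ha hb hab
  have hb' : b = 1 - a := by linarith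
  refine ⟨?_, ?_, ?_⟩
  · rw [lipschitzWith_iff_dist_le_mul] at *
    intro x y
    have e1 := g1 x y
    have e2 := h1 x y
    rw [Real.dist_eq] at *
    have : (a • g + b • h) x - (a • g + b • h) y = a * (g x - g y) + b * (h x - h y) := by
      simp only [Pi.add_apply, Pi.smul_apply, smul_eq_mul]; ring
    rw [this]
    refine (abs_add_le _ _).trans ?_
    rw [abs_mul, abs_mul, abs_of_nonneg ha, abs_of_nonneg hb]
    calc a * |g x - g y| + b * |h x - h y| ≤ a * (L * dist x y) + b * (L * dist x y) := by gcongr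
      _ = L * dist x y := by rw [← add_mul, hab, one_mul]
  · intro x y hxy
    have e1 := mul_le_mul_of_nonneg_left (g2 x y hxy) ha
    have e2 := mul_le_mul_of_nonneg_left (h2 x y hxy) hb
    simp only [Pi.add_apply, Pi.smul_apply, smul_eq_mul]
    subst hb'
    linarith
  · intro x
    have e1 := mul_le_mul_of_nonneg_left (g3 x).1 ha
    have e2 := mul_le_mul_of_nonneg_left (h3 x).1 hb
    have e3 := mul_le_mul_of_nonneg_left (g3 x).2 ha
    have e4 := mul_le_mul_of_nonneg_left (h3 x).2 hb
    simp only [Pi.add_apply, Pi.smul_apply, smul_eq_mul]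
    subst hb'
    constructor <;> linarith

lemma KK_compact (σ : ℝ) (N : ℕ) (m v M δ : ℝ) (L : NNReal) : IsCompact (KK σ N m v M δ L) := by
  have hc : IsCompact (Set.pi univ (fun x : ℝ =>
      Icc (m + (v - m) * sfun σ N x) (v + (M - v) * sfun σ N x))) :=
    isCompact_univ_pi fun x => isCompact_Icc
  apply hc.of_isClosed_subset
  · have : KK σ N m v M δ L = (⋂ x : ℝ, ⋂ y : ℝ, {g : ℝ → ℝ | dist (g x) (g y) ≤ L * dist x y}) ∩
      ((⋂ x : ℝ, ⋂ y : ℝ, ⋂ _ : x ≤ y,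
        {g : ℝ → ℝ | g x - δ * sfun σ N x ≤ g y - δ * sfun σ N y}) ∩
      ⋂ x : ℝ, ({g : ℝ → ℝ | m + (v - m) * sfun σ N x ≤ g x} ∩
        {g : ℝ → ℝ | g x ≤ v + (M - v) * sfun σ N x})) := by
      ext g
      simp only [KK, lipschitzWith_iff_dist_le_mul, mem_inter_iff, mem_iInter, Set.mem_ofPred_eq]
    rw [this]
    refine IsClosed.inter ?_ (IsClosed.inter ?_ ?_)
    · refine isClosed_iInter fun x => isClosed_iInter fun y => ?_
      exact isClosed_le ((continuous_apply x).dist (continuous_apply y)) continuous_const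
    · refine isClosed_iInter fun x => isClosed_iInter fun y => isClosed_iInter fun _ => ?_
      exact isClosed_le ((continuous_apply x).sub continuous_const)
        ((continuous_apply y).sub continuous_const)
    · refine isClosed_iInter fun x => IsClosed.inter ?_ ?_
      · exact isClosed_le continuous_const (continuous_apply x)
      · exact isClosed_le (continuous_apply x) continuous_const
  · rintro g ⟨_, _, g3⟩ x _
    exact g3 x

lemma KK_strict (hσ : 0 < σ) {N : ℕ} (hN : 1 ≤ N) {m v M δ : ℝ} {L : NNReal} (hδ : 0 < δ)
    {g : ℝ → ℝ} (hg : g ∈ KK σ N m v M δ L) : StrictMono g := by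
  intro x y hxy
  have := hg.2.1 x y hxy.le
  nlinarith [mul_pos hδ (sub_pos.2 (sfun_strict hσ hN hxy))]

lemma KK_range (hσ : 0 < σ) {N : ℕ} (hN : 1 ≤ N) {m v M δ : ℝ} {L : NNReal} (hm : m < v)
    (hM : v < M) {g : ℝ → ℝ} (hg : g ∈ KK σ N m v M δ L) (x : ℝ) : m < g x ∧ g x < M := by
  have h := hg.2.2 x
  have s := sfun_mem hσ hN x
  constructor
  · nlinarith [mul_pos (sub_pos.2 hm) s.1]
  · nlinarith [mul_pos (sub_pos.2 hM) (sub_pos.2 s.2)]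

/-- TT maps nice functions to KK -/
lemma TT_mem_KK (hσ : 0 < σ) {N : ℕ} (hN : 1 ≤ N) {m v M δ C : ℝ} {L : NNReal}
    (hδ : 0 ≤ δ) (hL : gq σ 0 * (2 * C) ≤ L) {φ : ℝ → ℝ} (hC : ∀ z, |φ z| ≤ C)
    (h1 : Monotone (fun z => φ z - δ * stp z)) (h2 : ∀ z, m + (v - m) * stp z ≤ φ z)
    (h3 : ∀ z, φ z ≤ v + (M - v) * stp z) : TT σ N φ ∈ KK σ N m v M δ L := by
  have hmono : Monotone φ := by
    intro x y hxy
    have e1 := h1 hxy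
    have e2 := mul_le_mul_of_nonneg_left (stp_mono hxy) hδ
    beta_reduce at e1
    linarith
  have hB : BM φ := ⟨hmono.measurable, C, hC⟩
  have hl : ∀ a b : ℝ, BM (fun z => a * 1 + b * stp z) := by
    intro a b
    refine ⟨measurable_const.add (stp_mono.measurable.const_mul b), |a| + |b|, fun z => ?_⟩
    refine (abs_add_le _ _).trans ?_
    have : |stp z| ≤ 1 := by unfold stp; split_ifs <;> simp
    rw [abs_mul b, mul_one]
    nlinarith [abs_nonneg b]
  have hlT : ∀ a b x : ℝ, TT σ N (fun z => a * 1 + b * stp z) x = a + b * sfun σ N x := by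
    intro a b x
    rw [TT_lin hσ N (BM_const 1) BM_stp, TT_one hσ hN]
    simp [sfun]
  refine ⟨TT_lip hσ hN hC hmono L hL, ?_, ?_⟩
  · intro x y hxy
    have hB' : BM (fun z => 1 * φ z + (-δ) * stp z) := by
      refine ⟨(hmono.measurable.const_mul 1).add (stp_mono.measurable.const_mul _), C + δ, fun z => ?_⟩
      refine (abs_add_le _ _).trans ?_
      have : |stp z| ≤ 1 := by unfold stp; split_ifs <;> simp
      rw [abs_mul (-δ), one_mul, abs_neg, abs_of_nonneg hδ]
      nlinarith [hC z]
    have h1' : Monotone (fun z => 1 * φ z + (-δ) * stp z) := by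
      intro x y hxy
      have := h1 hxy
      beta_reduce at this ⊢
      linarith
    have := TT_mono hσ hN hB' h1' hxy
    rw [TT_lin hσ N hB BM_stp, TT_lin hσ N hB BM_stp] at this
    unfold sfun
    linarith
  · intro x
    constructor
    · rw [← hlT]
      exact TT_le hσ hN (hl _ _) hB (fun z => by linarith [h2 z]) x
    · rw [← hlT]
      exact TT_le hσ hN hB (hl _ _) (fun z => by linarith [h3 z]) x

end Main

/-- For any `σ > 0` and integer `N ≥ 1` there exists a nondecreasing,
Lipschitz-continuous solution of (E) with values in `(m, M)`. -/
theorem stmt12 {Ω : Type*} [MeasurableSpace Ω] (P : Measure Ω) [IsProbabilityMeasure P]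
    (V : Ω → ℝ) (hVmeas : Measurable V) (hV : Integrable V P)
    (m M : ℝ) (hsupp : SuppIoo P V m M)
    (σ : ℝ) (hσ : 0 < σ) (N : ℕ) (hN : 1 ≤ N) :
    ∃ F : ℝ → ℝ, Monotone F ∧ (∃ K : NNReal, LipschitzWith K F) ∧
      (∀ x, F x ∈ Set.Ioo m M) ∧ SolvesE P V σ N F := by
  have hm := v_gt hVmeas hV hsupp
  have hM := v_lt hVmeas hV hsupp
  obtain ⟨v, hv⟩ : ∃ v, v = ∫ ω, V ω ∂P := ⟨_, rfl⟩
  rw [← hv] at hm hM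
  have s1 := sfun_mem hσ hN (-1)
  have s2 := sfun_mem hσ hN 1
  set a := m + (v - m) * sfun σ N (-1) with ha
  set b := v + (M - v) * sfun σ N 1 with hb
  have ha1 : m < a := by nlinarith [mul_pos (sub_pos.2 hm) s1.1]
  have ha2 : a < v := by nlinarith [mul_pos (sub_pos.2 hm) (sub_pos.2 s1.2)]
  have hb1 : v < b := by nlinarith [mul_pos (sub_pos.2 hM) s2.1]
  have hb2 : b < M := by nlinarith [mul_pos (sub_pos.2 hM) (sub_pos.2 s2.2)]
  have hD1 := D_pos_left hVmeas hV hsupp ha1 (hv ▸ ha2)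
  have hD2 := D_pos_right hVmeas hV hsupp hb2 (hv ▸ hb1)
  set d := min (Phip P V a - (∫ ω, V ω ∂P) * Pip P V a)
      (Phip P V b - (∫ ω, V ω ∂P) * Pip P V b) with hd
  have hdpos : 0 < d := lt_min hD1 hD2
  have hq : 0 < ∫ z in Ioc (-1:ℝ) 1, gq σ (0 - z) := by
    rw [← intervalIntegral.integral_of_le (by norm_num)]
    apply intervalIntegral.intervalIntegral_pos_of_pos
    · exact (gq_int hσ 0).intervalIntegrable
    · exact fun z => gq_pos hσ _
    · norm_num
  set δ := min (d * ∫ z in Ioc (-1:ℝ) 1, gq σ (0 - z)) (M - v) with hδdef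
  have hδ : 0 < δ := lt_min (mul_pos hdpos hq) (sub_pos.2 hM)
  set C := max |m| |M|
  have hCb : ∀ y, m ≤ y → y ≤ M → |y| ≤ C := by
    intro y h1 h2
    exact abs_le_max_abs_abs h1 h2
  have hC0 : 0 ≤ C := (abs_nonneg m).trans (le_max_left _ _)
  let L : NNReal := Real.toNNReal (gq σ 0 * (2 * C))
  have hL : gq σ 0 * (2 * C) ≤ L := Real.le_coe_toNNReal _
  let K := KK σ N m v M δ L
  have hstp : ∀ z, 0 ≤ stp z ∧ stp z ≤ 1 := by
    intro z; unfold stp; split_ifs <;> norm_num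
  have hbd : ∀ φ : ℝ → ℝ, (∀ z, m + (v - m) * stp z ≤ φ z) → (∀ z, φ z ≤ v + (M - v) * stp z) →
      ∀ z, |φ z| ≤ C := by
    intro φ h1 h2 z
    apply hCb
    · nlinarith [h1 z, mul_nonneg (sub_pos.2 hm).le (hstp z).1]
    · nlinarith [h2 z, mul_nonneg (sub_pos.2 hM).le (sub_nonneg.2 (hstp z).2)]
  have hgood : ∀ g ∈ K, Monotone (fun z => phig P V σ g z - δ * stp z) ∧
      (∀ z, m + (v - m) * stp z ≤ phig P V σ g z) ∧
      (∀ z, phig P V σ g z ≤ v + (M - v) * stp z) := by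
    intro g hg
    have hst := KK_strict hσ hN hδ hg
    have hr := KK_range hσ hN hm hM hg
    have hgap : (∫ ω, V ω ∂P) + δ ≤ phip P V σ g 0 := by
      apply phip_gap hVmeas hV hsupp hσ hst.monotone.measurable (fun z => (hr z).2) (a := a) (b := b)
        _ hδ.le (min_le_left _ _)
      intro z hz
      exact ⟨(hg.2.2 (-1)).1.trans (hst.monotone hz.1.le),
        (hst.monotone hz.2).trans (hg.2.2 1).2⟩
    have := phig_good hVmeas hV hsupp hσ hst.monotone hr hδ.le hgap
    rw [← hv] at this
    exact this
  have hBM : ∀ g ∈ K, BM (phig P V σ g) := by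
    intro g hg
    obtain ⟨h1, h2, h3⟩ := hgood g hg
    have := h1.measurable.add (stp_mono.measurable.const_mul δ)
    refine ⟨?_, C, hbd _ h2 h3⟩
    refine (congrArg Measurable ?_).mp this
    ext z; simp
  have hmaps : MapsTo (fun g => TT σ N (phig P V σ g)) K K := by
    intro g hg
    obtain ⟨h1, h2, h3⟩ := hgood g hg
    exact TT_mem_KK hσ hN hδ.le hL (hbd _ h2 h3) h1 h2 h3
  have hne : K.Nonempty := by
    refine ⟨_, TT_mem_KK hσ hN hδ.le hL (φ := fun z => v + (M - v) * stp z) (hbd _ ?_ ?_) ?_ ?_ ?_⟩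
    · intro z; nlinarith [(hstp z).1, (hstp z).2]
    · intro z; exact le_rfl
    · intro x y hxy
      have := stp_mono hxy
      have h2 : δ ≤ M - v := min_le_right _ _
      beta_reduce
      nlinarith
    · intro z; nlinarith [(hstp z).1, (hstp z).2]
    · intro z; exact le_rfl
  have hcomp : IsCompact K := KK_compact _ _ _ _ _ _ _
  have hfc : FirstCountableTopology K := fc_of_compact hcomp (fun g hg => hg.1.continuous)
  have hcont : ContinuousOn (fun g => TT σ N (phig P V σ g)) K := by
    rw [continuousOn_iff_continuous_domRestrict]
    apply continuous_pi
    intro x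
    exact TT_cont hVmeas hV hsupp hσ (fun h : K => h.1)
      (fun z => (continuous_apply z).comp continuous_subtype_val)
      (fun h => KK_strict hσ hN hδ h.2) (fun h => KK_range hσ hN hm hM h.2) hN
      (fun h => hBM _ h.2) (fun h => hbd _ (hgood _ h.2).2.1 (hgood _ h.2).2.2) x
  obtain ⟨F, hF, hTF⟩ := schauder_pi K hcomp (KK_convex _ _ _ _ _ _ _) hne _ hcont hmaps
  refine ⟨F, (KK_strict hσ hN hδ hF).monotone, ⟨L, hF.1⟩, fun x => KK_range hσ hN hm hM hF x, ?_⟩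
  intro x
  exact (congrFun hTF x).symm
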